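/- arXiv:0905.0506 — 4 statements merged into one kernel-verified Lean document; each statement's English description precedes it below -/
import Mathlib

section
/- Let E be a real normed vector space of finite dimension m, and let S(E) = {v ∈ E : ‖v‖ = 1} be its unit sphere. Suppose S(E) is covered by k subsets C_1, …, C_k such that each C_i is invariant under the antipodal map v ↦ -v, and each C_i admits a subset A_i ⊆ C_i which is both open and closed in the subspace topology of C_i and satisfies C_i = A_i ∪ (-A_i) and A_i ∩ (-A_i) = ∅. Then m ≤ k. -/
/-! The odd functions `dist (v, -A i) - dist (v, A i)` have no common zero on the unit sphere, so
the bound follows from the Borsuk–Ulam theorem, for which there is an algebraic proof. Let `d i` be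
odd and `h i` of degree at most `d i`. For all but countably many `s`, a deformation from `s = 0`
shows that the algebra `ℝ[X] / (X i ^ d i + s * h i)` has the odd dimension `∏ i, d i`; hence it has
`ℝ` as a residue field, and the equations `X i ^ d i + s * h i = 0` have a common real solution. For
forms of odd degrees in one more variable than there are forms, dehomogenizing and letting `s → ∞`
gives a common zero on the sphere. By Stone–Weierstrass, continuous odd functions on the sphere are
uniform limits of restrictions of such forms, hence have a common zero as well. -/

open MvPolynomial Metric

section PowSubst

variable {R S σ τ : Type*}

section CommSemiring

variable [CommSemiring R] [CommSemiring S]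

theorem totalDegree_sum_smul_prod_le (p : MvPolynomial σ R) {F : σ → ℕ → MvPolynomial τ R}
    (hF : ∀ i k, (F i k).totalDegree ≤ k) :
    (∑ c ∈ p.support, coeff c p • c.prod F).totalDegree ≤ p.totalDegree := by
  refine totalDegree_finsetSum_le fun c hc ↦ (totalDegree_smul_le _ _).trans ?_
  calc (c.prod F).totalDegree ≤ ∑ i ∈ c.support, (F i (c i)).totalDegree :=
        totalDegree_finsetProd _ _
    _ ≤ c.sum fun _ k ↦ k := Finset.sum_le_sum fun i _ ↦ hF i (c i)
    _ ≤ p.totalDegree := le_totalDegree hc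

/-- View `MvPolynomial σ R` as a free module over the subalgebra generated by the `X i ^ d i`, with
basis the monomials whose exponent of `X i` is less than `d i` for all `i`. The map `powSubst d g`
fixes this basis and substitutes `g i` for `X i ^ d i` in the coefficients. -/
noncomputable def powSubst (d : σ → ℕ) (g : σ → MvPolynomial σ R) :
    MvPolynomial σ R →ₗ[R] MvPolynomial σ R :=
  (basisMonomials σ R).constr R fun c ↦ c.prod fun i k ↦ X i ^ (k % d i) * g i ^ (k / d i)

variable {d : σ → ℕ} {g : σ → MvPolynomial σ R}

theorem powSubst_monomial (c : σ →₀ ℕ) (a : R) :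
    powSubst d g (monomial c a) =
      a • c.prod fun i k ↦ X i ^ (k % d i) * g i ^ (k / d i) := by
  rw [show monomial c a = a • basisMonomials σ R c by simp [smul_monomial], map_smul, powSubst,
    Module.Basis.constr_basis]

theorem powSubst_eq_sum (p : MvPolynomial σ R) :
    powSubst d g p =
      ∑ c ∈ p.support, coeff c p • c.prod fun i k ↦ X i ^ (k % d i) * g i ^ (k / d i) := by
  conv_lhs => rw [p.as_sum, map_sum]
  simp only [powSubst_monomial]

theorem powSubst_X_pow_mul {i : σ} (hd : 0 < d i) (p : MvPolynomial σ R) :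
    powSubst d g (X i ^ d i * p) = g i * powSubst d g p := by
  induction p using MvPolynomial.induction_on' with
  | add p q hp hq => rw [mul_add, map_add, hp, hq, map_add, mul_add]
  | monomial c a =>
    have herase : (Finsupp.single i (d i) + c).erase i = c.erase i := by
      rw [Finsupp.erase_add, Finsupp.erase_single, zero_add]
    rw [X_pow_eq_monomial, monomial_mul, one_mul, powSubst_monomial, powSubst_monomial,
      ← Finsupp.mul_prod_erase' _ i _ (by simp), herase, ← Finsupp.mul_prod_erase' c i _ (by simp)]
    simp only [Finsupp.add_apply, Finsupp.single_eq_same, Nat.add_mod_left,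
      Nat.add_div_left _ hd, pow_succ, mul_smul_comm]
    ring_nf

theorem totalDegree_powSubst_le (hg : ∀ i, (g i).totalDegree ≤ d i) (p : MvPolynomial σ R) :
    (powSubst d g p).totalDegree ≤ p.totalDegree := by
  rw [powSubst_eq_sum]
  refine totalDegree_sum_smul_prod_le p fun i k ↦ ?_
  calc (X i ^ (k % d i) * g i ^ (k / d i)).totalDegree
      ≤ k % d i + k / d i * d i :=
        (totalDegree_mul _ _).trans <| add_le_add
          (isHomogeneous_X_pow i _).totalDegree_le
          ((totalDegree_pow _ _).trans (Nat.mul_le_mul_left _ (hg i)))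
    _ = k := Nat.mod_add_div' k (d i)

theorem powSubst_X_pow : powSubst d (fun i ↦ (X i ^ d i : MvPolynomial σ R)) = LinearMap.id := by
  refine (basisMonomials σ R).ext fun c ↦ ?_
  rw [coe_basisMonomials, powSubst_monomial, one_smul, LinearMap.id_apply]
  simp only [← pow_mul, ← pow_add, Nat.mod_add_div, monomial_eq, C_1, one_mul]

theorem map_powSubst (φ : R →+* S) (p : MvPolynomial σ R) :
    map φ (powSubst d g p) = powSubst d (fun i ↦ map φ (g i)) (map φ p) := by
  induction p using MvPolynomial.induction_on' with
  | add p q hp hq => simp only [map_add, hp, hq]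
  | monomial c a =>
    simp only [powSubst_monomial, map_monomial, smul_eq_C_mul, map_mul, map_C, map_finsuppProd,
      map_pow, map_X]

theorem coe_basisRestrictSupport (I : Set (σ →₀ ℕ)) (a : I) :
    (basisRestrictSupport R I a : MvPolynomial σ R) = monomial a.1 1 := by
  classical
  have hbasis : basisRestrictSupport R I a =
      ⟨monomial a.1 1, (monomial_mem_restrictSupport R).2 (.inl a.2)⟩ := by
    refine Module.Basis.apply_eq_iff.2 (Finsupp.ext fun b ↦ ?_)
    change coeff b.1 (monomial a.1 1) = Finsupp.single a 1 b
    simp only [coeff_monomial, Finsupp.single_apply, Subtype.coe_inj]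
  rw [hbasis]

theorem totalDegree_X_pow_add_C_mul_le {i : σ} {n : ℕ} (s : R) {h : MvPolynomial σ R}
    (hh : h.totalDegree ≤ n) : (X i ^ n + C s * h).totalDegree ≤ n := by
  refine (totalDegree_add _ _).trans <| max_le (isHomogeneous_X_pow i n).totalDegree_le ?_
  rw [← smul_eq_C_mul]
  exact (totalDegree_smul_le s h).trans hh

end CommSemiring

variable [CommRing R] [CommRing S] {d : σ → ℕ} {g : σ → MvPolynomial σ R}

/-- The restriction of `powSubst d g` to polynomials of total degree at most `e`, on which it has a
determinant. -/
noncomputable def powSubstLE (hg : ∀ i, (g i).totalDegree ≤ d i) (e : ℕ) :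
    Module.End R (restrictTotalDegree σ R e) :=
  (powSubst d g).restrict fun p hp ↦ by
    rw [mem_restrictTotalDegree] at hp ⊢
    exact (totalDegree_powSubst_le hg p).trans hp

theorem bijective_powSubst (hg : ∀ i, (g i).totalDegree ≤ d i)
    (hbij : ∀ e, Function.Bijective (powSubstLE hg e)) : Function.Bijective (powSubst d g) := by
  have mem_totalDegree (p : MvPolynomial σ R) : p ∈ restrictTotalDegree σ R p.totalDegree :=
    (mem_restrictTotalDegree _ _ _).2 le_rfl
  constructor
  · refine (injective_iff_map_eq_zero _).2 fun p hp ↦ ?_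
    have hker : powSubstLE hg _ ⟨p, mem_totalDegree p⟩ = 0 := Subtype.ext hp
    exact congrArg Subtype.val ((map_eq_zero_iff _ (hbij _).1).1 hker)
  · intro p
    obtain ⟨q, hq⟩ := (hbij _).2 ⟨p, mem_totalDegree p⟩
    exact ⟨q, congrArg Subtype.val hq⟩

theorem map_det_powSubstLE [Finite σ] (φ : R →+* S) (hg : ∀ i, (g i).totalDegree ≤ d i)
    {g' : σ → MvPolynomial σ S} (hg' : ∀ i, (g' i).totalDegree ≤ d i)
    (hmap : ∀ i, map φ (g i) = g' i) (e : ℕ) :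
    φ (powSubstLE hg e).det = (powSubstLE hg' e).det := by
  classical
  obtain rfl : (fun i ↦ map φ (g i)) = g' := funext hmap
  let I : Set (σ →₀ ℕ) := {c | (c.sum fun _ k ↦ k) ≤ e}
  have : Fintype I := (Finsupp.finite_of_degree_le e).fintype
  let bR : Module.Basis I R (restrictTotalDegree σ R e) := basisRestrictSupport R I
  let bS : Module.Basis I S (restrictTotalDegree σ S e) := basisRestrictSupport S I
  have repr_R (p : restrictTotalDegree σ R e) (a : I) : bR.repr p a = coeff a.1 p.1 := rfl
  have repr_S (p : restrictTotalDegree σ S e) (a : I) : bS.repr p a = coeff a.1 p.1 := rfl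
  have coe_bR (a : I) : (bR a : MvPolynomial σ R) = monomial a.1 1 :=
    coe_basisRestrictSupport I a
  have coe_bS (a : I) : (bS a : MvPolynomial σ S) = monomial a.1 1 :=
    coe_basisRestrictSupport I a
  rw [← LinearMap.det_toMatrix bR, RingHom.map_det, ← LinearMap.det_toMatrix bS]
  congr 1
  ext a b
  rw [RingHom.mapMatrix_apply, Matrix.map_apply, LinearMap.toMatrix_apply, LinearMap.toMatrix_apply,
    repr_R, repr_S, powSubstLE, powSubstLE, LinearMap.coe_restrict_apply,
    LinearMap.coe_restrict_apply, coe_bR, coe_bS, ← coeff_map, map_powSubst, map_monomial, map_one]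

theorem countable_not_bijective_powSubst [Finite σ] {K : Type*} [Field K]
    {h : σ → MvPolynomial σ K} (hh : ∀ i, (h i).totalDegree ≤ d i) :
    {s : K | ¬ Function.Bijective (powSubst d fun i ↦ X i ^ d i + C s * h i)}.Countable := by
  let G (i : σ) : MvPolynomial σ (Polynomial K) :=
    X i ^ d i + C Polynomial.X * map Polynomial.C (h i)
  have hG (i : σ) : (G i).totalDegree ≤ d i :=
    totalDegree_X_pow_add_C_mul_le _ <| (Finset.sup_mono (support_map_subset _ _)).trans (hh i)
  have map_G (s : K) (i : σ) :
      map (Polynomial.evalRingHom s) (G i) = X i ^ d i + C s * h i := by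
    have hid : (Polynomial.evalRingHom s).comp Polynomial.C = RingHom.id K := by ext; simp
    simp [G, map_map, hid, map_id]
  have hg (s : K) (i : σ) : (X i ^ d i + C s * h i).totalDegree ≤ d i :=
    totalDegree_X_pow_add_C_mul_le s (hh i)
  have eval_det (e : ℕ) (s : K) : (powSubstLE hG e).det.eval s = (powSubstLE (hg s) e).det :=
    map_det_powSubstLE (Polynomial.evalRingHom s) hG (hg s) (map_G s) e
  -- The determinant is polynomial in `s`, with value `1` at `s = 0`.
  have det_ne_zero (e : ℕ) : (powSubstLE hG e).det ≠ 0 := fun h0 ↦ by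
    have hid : powSubstLE (hg 0) e = LinearMap.id := by
      ext1 p
      refine Subtype.ext ?_
      simp [powSubstLE, powSubst_X_pow]
    have := eval_det e 0
    rw [h0, hid, LinearMap.det_id, Polynomial.eval_zero] at this
    exact zero_ne_one this
  refine (Set.countable_iUnion fun e ↦
    (Polynomial.rootSet_finite (powSubstLE hG e).det K).countable).mono fun s hs ↦ ?_
  contrapose! hs
  simp only [Set.mem_ofPred_eq, not_not]
  refine bijective_powSubst (hg s) fun e ↦ ?_
  have : Module.Finite K (restrictTotalDegree σ K e) := inferInstance
  rw [← Module.End.isUnit_iff, LinearMap.isUnit_iff_isUnit_det, isUnit_iff_ne_zero, ← eval_det]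
  exact fun h0 ↦ hs (Set.mem_iUnion.2 ⟨e, by simpa [Polynomial.mem_rootSet, det_ne_zero] using h0⟩)

theorem finrank_quotient_span_X_pow [Fintype σ] [Nontrivial R] (d : σ → ℕ) :
    Module.finrank R
      (MvPolynomial σ R ⧸ Ideal.span (Set.range fun i ↦ (X i ^ d i : MvPolynomial σ R))) =
      ∏ i, d i := by
  classical
  let exponent (a : ∀ i, Fin (d i)) : σ →₀ ℕ := Finsupp.equivFunOnFinite.symm fun i ↦ a i
  have exponent_injective : Function.Injective exponent := fun a b hab ↦
    funext fun i ↦ Fin.ext (DFunLike.congr_fun hab i)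
  let coeffs : MvPolynomial σ R →ₗ[R] (∀ i, Fin (d i)) → R :=
    LinearMap.pi fun a ↦ lcoeff R (exponent a)
  have hsurj : Function.Surjective coeffs := fun v ↦ by
    refine ⟨∑ a, monomial (exponent a) (v a), funext fun a ↦ ?_⟩
    simp [coeffs, coeff_monomial, exponent_injective.eq_iff]
  have hker : LinearMap.ker coeffs =
      (Ideal.span (Set.range fun i ↦ (X i ^ d i : MvPolynomial σ R))).restrictScalars R := by
    ext p
    have hset : Set.range (fun i ↦ (X i ^ d i : MvPolynomial σ R)) =
        (fun c ↦ monomial c 1) '' Set.range fun i ↦ Finsupp.single i (d i) := by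
      rw [← Set.range_comp]
      exact congrArg Set.range (funext fun i ↦ X_pow_eq_monomial)
    rw [Submodule.restrictScalars_mem, hset, mem_ideal_span_monomial_image]
    simp only [Set.exists_range_iff, Finsupp.single_le_iff, LinearMap.mem_ker]
    refine ⟨fun h c hc ↦ ?_, fun h ↦ funext fun a ↦ ?_⟩
    · by_contra! hlt
      have hexp : exponent (fun i ↦ ⟨c i, hlt i⟩) = c := Finsupp.ext fun _ ↦ rfl
      exact mem_support_iff.1 hc (hexp ▸ congrFun h fun i ↦ ⟨c i, hlt i⟩)
    · by_contra hne
      obtain ⟨i, hi⟩ := h (exponent a) (mem_support_iff.2 hne)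
      exact (a i).2.not_ge hi
  rw [← (Submodule.Quotient.restrictScalarsEquiv R _).finrank_eq, ← hker,
    (coeffs.quotKerEquivOfSurjective hsurj).finrank_eq, Module.finrank_fintype_fun_eq_card,
    Fintype.card_pi]
  simp only [Fintype.card_fin]

theorem map_powSubst_span_X_pow [Finite σ] (hd : ∀ i, 0 < d i)
    (hg : Function.Surjective (powSubst d g)) :
    ((Ideal.span (Set.range fun i ↦ (X i ^ d i : MvPolynomial σ R))).restrictScalars R).map
      (powSubst d g) = (Ideal.span (Set.range g)).restrictScalars R := by
  have := Fintype.ofFinite σ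
  have map_sum_mul (q : σ → MvPolynomial σ R) :
      powSubst d g (∑ i, q i * X i ^ d i) = ∑ i, powSubst d g (q i) * g i := by
    simp only [map_sum, mul_comm _ (X _ ^ _), mul_comm _ (g _), powSubst_X_pow_mul (hd _)]
  ext p
  simp only [Submodule.mem_map, Submodule.restrictScalars_mem, Ideal.mem_span_range_iff_exists_fun]
  constructor
  · rintro ⟨_, ⟨q, rfl⟩, rfl⟩
    exact ⟨fun i ↦ powSubst d g (q i), (map_sum_mul q).symm⟩
  · rintro ⟨r, rfl⟩
    choose q hq using fun i ↦ hg (r i)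
    exact ⟨_, ⟨q, rfl⟩, by simp only [map_sum_mul, hq]⟩

theorem finrank_quotient_span_range_of_bijective_powSubst [Fintype σ] [Nontrivial R]
    (hd : ∀ i, 0 < d i) (hg : Function.Bijective (powSubst d g)) :
    Module.finrank R (MvPolynomial σ R ⧸ Ideal.span (Set.range g)) = ∏ i, d i := by
  rw [← finrank_quotient_span_X_pow (R := R) d,
    ← (Submodule.Quotient.restrictScalarsEquiv R _).finrank_eq,
    ← (Submodule.Quotient.restrictScalarsEquiv R _).finrank_eq]
  exact (Submodule.Quotient.equiv _ _ (.ofBijective _ hg)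
    (map_powSubst_span_X_pow hd hg.2)).finrank_eq.symm

end PowSubst

theorem nonempty_algHom_real_of_isSimpleModule {A V : Type*} [CommRing A] [Algebra ℝ A]
    [AddCommGroup V] [Module ℝ V] [Module A V] [IsScalarTower ℝ A V] [IsSimpleModule A V]
    (hV : Odd (Module.finrank ℝ V)) : Nonempty (A →ₐ[ℝ] ℝ) := by
  obtain ⟨I, hI, ⟨e⟩⟩ := isSimpleModule_iff_quot_maximal.1 ‹IsSimpleModule A V›
  let _ := Ideal.Quotient.field I
  rw [(e.restrictScalars ℝ).finrank_eq] at hV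
  have : Module.Finite ℝ (A ⧸ I) := Module.finite_of_finrank_pos hV.pos
  obtain ⟨⟨φ⟩⟩ | ⟨⟨φ⟩⟩ := Real.nonempty_algEquiv_or (A ⧸ I)
  · exact ⟨φ.toAlgHom.comp (Ideal.Quotient.mkₐ ℝ I)⟩
  · rw [φ.toLinearEquiv.finrank_eq, Complex.finrank_real_complex] at hV
    exact absurd hV (by decide)

theorem nonempty_algHom_real_of_odd_finrank {A V : Type*} [CommRing A] [Algebra ℝ A]
    [AddCommGroup V] [Module ℝ V] [Module A V] [IsScalarTower ℝ A V]
    (hV : Odd (Module.finrank ℝ V)) : Nonempty (A →ₐ[ℝ] ℝ) := by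
  have : Module.Finite ℝ V := Module.finite_of_finrank_pos hV.pos
  have hlength : IsFiniteLength A V := isFiniteLength_iff_isNoetherian_isArtinian.2
    ⟨isNoetherian_of_tower ℝ inferInstance, isArtinian_of_tower ℝ inferInstance⟩
  -- `IsFiniteLength A` forgets the `ℝ`-structure, so the induction has to range over it.
  clear this
  revert hV ‹IsScalarTower ℝ A V› ‹Module ℝ V›
  induction hlength with
  | of_subsingleton =>
    intro _ _ hV
    simp [Module.finrank_zero_of_subsingleton] at hV
  | @of_simple_quotient V _ _ N _ _ ih =>
    intro _ _ hV
    have : Module.Finite ℝ V := Module.finite_of_finrank_pos hV.pos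
    have hadd : Module.finrank ℝ (V ⧸ N) + Module.finrank ℝ N = Module.finrank ℝ V :=
      (N.restrictScalars ℝ).finrank_quotient_add_finrank
    obtain heven | hodd := Nat.even_or_odd (Module.finrank ℝ N)
    · exact nonempty_algHom_real_of_isSimpleModule (V := V ⧸ N) (by grind)
    · exact ih hodd

theorem exists_forall_eval_eq_zero_of_odd_finrank_quotient {σ : Type*}
    {I : Ideal (MvPolynomial σ ℝ)} (hI : Odd (Module.finrank ℝ (MvPolynomial σ ℝ ⧸ I))) :
    ∃ x, ∀ p ∈ I, eval x p = 0 := by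
  obtain ⟨φ⟩ := nonempty_algHom_real_of_odd_finrank (A := MvPolynomial σ ℝ ⧸ I) hI
  let ψ : MvPolynomial σ ℝ →ₐ[ℝ] ℝ := φ.comp (Ideal.Quotient.mkₐ ℝ I)
  refine ⟨fun i ↦ ψ (X i), fun p hp ↦ ?_⟩
  calc eval (fun i ↦ ψ (X i)) p = ψ p := (DFunLike.congr_fun (aeval_unique ψ) p).symm
    _ = 0 := by simp [ψ, Ideal.Quotient.eq_zero_iff_mem.2 hp]

theorem exists_gt_exists_forall_pow_add_mul_eval_eq_zero {σ : Type*} [Finite σ] {d : σ → ℕ}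
    (hd : ∀ i, Odd (d i)) {h : σ → MvPolynomial σ ℝ} (hh : ∀ i, (h i).totalDegree ≤ d i) (S : ℝ) :
    ∃ s > S, ∃ x : σ → ℝ, ∀ i, x i ^ d i + s * eval x (h i) = 0 := by
  have := Fintype.ofFinite σ
  obtain ⟨s, hs, hSs⟩ := ((countable_not_bijective_powSubst hh).dense_compl ℝ).exists_gt S
  have hodd : Odd (∏ i, d i) :=
    Finset.prod_induction _ Odd (fun _ _ ↦ Odd.mul) odd_one fun i _ ↦ hd i
  rw [← finrank_quotient_span_range_of_bijective_powSubst (fun i ↦ (hd i).pos) (not_not.1 hs)]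
    at hodd
  obtain ⟨x, hx⟩ := exists_forall_eval_eq_zero_of_odd_finrank_quotient hodd
  refine ⟨s, hSs, x, fun i ↦ ?_⟩
  simpa using hx _ (Ideal.subset_span ⟨i, rfl⟩)

theorem exists_eq_zero_of_forall_exists_norm_lt {X G : Type*} [TopologicalSpace X]
    [NormedAddCommGroup G] {K : Set X} (hK : IsCompact K) {F : X → G} (hF : ContinuousOn F K)
    (h : ∀ ε > 0, ∃ u ∈ K, ‖F u‖ < ε) : ∃ u ∈ K, F u = 0 := by
  have hmem : (0 : G) ∈ closure (F '' K) := mem_closure_iff.2 fun ε hε ↦ by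
    simpa using h ε hε
  rwa [(hK.image_of_continuousOn hF).isClosed.closure_eq] at hmem

theorem totalDegree_aeval_le {R σ τ : Type*} [CommSemiring R] {f : σ → MvPolynomial τ R}
    (hf : ∀ i, (f i).totalDegree ≤ 1) (p : MvPolynomial σ R) :
    (aeval f p).totalDegree ≤ p.totalDegree := by
  rw [aeval_def, eval₂_eq]
  simp only [← Algebra.smul_def]
  refine totalDegree_sum_smul_prod_le p fun i k ↦ (totalDegree_pow _ _).trans ?_
  exact mul_le_of_le_one_right' (hf i)

theorem eval_smul_of_isHomogeneous {R σ : Type*} [CommSemiring R] {P : MvPolynomial σ R} {n : ℕ}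
    (hP : P.IsHomogeneous n) (r : R) (x : σ → R) : eval (r • x) P = r ^ n * eval x P := by
  rw [eval_eq, eval_eq, Finset.mul_sum]
  refine Finset.sum_congr rfl fun c hc ↦ ?_
  simp only [Pi.smul_apply, smul_eq_mul, mul_pow, Finset.prod_mul_distrib,
    Finset.prod_pow_eq_pow_sum, ← hP.degree_eq_sum_deg_support hc]
  ring

theorem exists_gt_exists_mem_sphere_forall_mul_eval_eq_neg_pow {σ : Type*} [Fintype σ] {d : σ → ℕ}
    (hd : ∀ i, Odd (d i)) {P : σ → MvPolynomial (Option σ) ℝ}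
    (hP : ∀ i, (P i).IsHomogeneous (d i)) (S : ℝ) :
    ∃ s > S, ∃ u ∈ sphere (0 : EuclideanSpace ℝ (Option σ)) 1,
      ∀ i, s * eval u (P i) = -u (some i) ^ d i := by
  let dehomogenize : Option σ → MvPolynomial σ ℝ := fun o ↦ o.elim 1 X
  obtain ⟨s, hs, x, hx⟩ := exists_gt_exists_forall_pow_add_mul_eval_eq_zero hd
    (h := fun i ↦ aeval dehomogenize (P i))
    (fun i ↦ (totalDegree_aeval_le (fun o ↦ by cases o <;> simp [dehomogenize]) _).trans
      (hP i).totalDegree_le) S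
  let v : EuclideanSpace ℝ (Option σ) := .toLp 2 fun o ↦ o.elim 1 x
  have eval_v (i : σ) : eval x (aeval dehomogenize (P i)) = eval v (P i) := by
    have helim : (fun o ↦ eval x (dehomogenize o)) = v := by ext (_ | _) <;> simp [dehomogenize, v]
    rw [← helim]
    exact comp_aeval_apply _ (aeval x : MvPolynomial σ ℝ →ₐ[ℝ] ℝ) (P i)
  have hv : v ≠ 0 := fun h0 ↦ one_ne_zero (congrArg (· none) h0)
  refine ⟨s, hs, ‖v‖⁻¹ • v, mem_sphere_zero_iff_norm.2 (norm_smul_inv_norm hv), fun i ↦ ?_⟩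
  have hvx : v (some i) = x i := rfl
  have hxi := eval_v i ▸ hx i
  simp only [WithLp.ofLp_smul, eval_smul_of_isHomogeneous (hP i), Pi.smul_apply, smul_eq_mul,
    mul_pow, hvx]
  linear_combination ‖v‖⁻¹ ^ d i * hxi

theorem exists_mem_sphere_forall_eval_eq_zero {σ : Type*} [Fintype σ] {d : σ → ℕ}
    (hd : ∀ i, Odd (d i)) {P : σ → MvPolynomial (Option σ) ℝ}
    (hP : ∀ i, (P i).IsHomogeneous (d i)) :
    ∃ u ∈ sphere (0 : EuclideanSpace ℝ (Option σ)) 1, ∀ i, eval u (P i) = 0 := by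
  suffices ∃ u ∈ sphere (0 : EuclideanSpace ℝ (Option σ)) 1, (fun i ↦ eval u (P i)) = 0 by
    simpa only [funext_iff, Pi.zero_apply] using this
  have hcont : Continuous fun (u : EuclideanSpace ℝ (Option σ)) i ↦ eval u (P i) :=
    continuous_pi fun i ↦ (continuous_eval (P i)).comp (PiLp.continuous_ofLp 2 _)
  refine exists_eq_zero_of_forall_exists_norm_lt (isCompact_sphere _ _) hcont.continuousOn
    fun ε hε ↦ ?_
  obtain ⟨s, hs, u, hu, hsu⟩ :=
    exists_gt_exists_mem_sphere_forall_mul_eval_eq_neg_pow hd hP ε⁻¹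
  refine ⟨u, hu, (pi_norm_lt_iff hε).2 fun i ↦ ?_⟩
  have hs0 : 0 < s := (inv_pos.2 hε).trans hs
  have hle : s * ‖eval u (P i)‖ ≤ 1 := calc
    s * ‖eval u (P i)‖ = ‖u (some i)‖ ^ d i := by
      rw [← norm_pow, ← norm_neg (u (some i) ^ d i), ← hsu, norm_mul, Real.norm_of_nonneg hs0.le]
    _ ≤ 1 := pow_le_one₀ (norm_nonneg _)
      ((PiLp.norm_apply_le u _).trans_eq (mem_sphere_zero_iff_norm.1 hu))
  calc ‖eval u (P i)‖ ≤ s⁻¹ := by rwa [← one_div, le_div_iff₀' hs0]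
    _ < ε := inv_lt_of_inv_lt₀ hε hs

theorem exists_isHomogeneous_eval_eq_odd_part {σ : Type*} [Fintype σ] (p : MvPolynomial σ ℝ) :
    ∃ d, Odd d ∧ ∃ q : MvPolynomial σ ℝ, q.IsHomogeneous d ∧
      ∀ u ∈ sphere (0 : EuclideanSpace ℝ σ) 1, 2 * eval u q = eval u p - eval (-u) p := by
  -- As `∑ i, X i ^ 2` is `1` on the sphere, its powers bring all odd components to one odd degree.
  let D := 2 * p.totalDegree + 1
  let q : MvPolynomial σ ℝ := ∑ j ∈ Finset.range (p.totalDegree + 1) with Odd j,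
    homogeneousComponent j p * (∑ i, X i ^ 2) ^ ((D - j) / 2)
  have hq : q.IsHomogeneous D := by
    refine IsHomogeneous.sum _ _ _ fun j hj ↦ ?_
    have hsq : (∑ i, X i ^ 2 : MvPolynomial σ ℝ).IsHomogeneous 2 :=
      IsHomogeneous.sum _ _ _ fun i _ ↦ isHomogeneous_X_pow i 2
    have hdeg : j + 2 * ((D - j) / 2) = D := by
      simp only [Finset.mem_filter, Finset.mem_range] at hj
      grind
    have hmul := (homogeneousComponent_isHomogeneous j p).mul (hsq.pow ((D - j) / 2))
    rwa [hdeg] at hmul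
  refine ⟨D, ⟨_, rfl⟩, q, hq, fun u hu ↦ ?_⟩
  have hu1 : ∑ i, u i ^ 2 = 1 := by
    rw [← EuclideanSpace.real_norm_sq_eq, mem_sphere_zero_iff_norm.1 hu, one_pow]
  have eval_neg (j : ℕ) : eval (-u) (homogeneousComponent j p) =
      (-1) ^ j * eval u (homogeneousComponent j p) := by
    rw [← eval_smul_of_isHomogeneous (homogeneousComponent_isHomogeneous j p), neg_one_smul]
    rfl
  have eval_q : eval u q = ∑ j ∈ Finset.range (p.totalDegree + 1) with Odd j,
      eval u (homogeneousComponent j p) := by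
    simp [q, hu1]
  conv_rhs => rw [← sum_homogeneousComponent p]
  rw [eval_q, map_sum, map_sum, ← Finset.sum_sub_distrib, Finset.sum_filter, Finset.mul_sum]
  refine Finset.sum_congr rfl fun j _ ↦ ?_
  rw [eval_neg]
  obtain hj | hj := Nat.even_or_odd j
  · simp [hj.neg_one_pow, Nat.not_odd_iff_even.2 hj]
  · simp [hj.neg_one_pow, hj, two_mul]

theorem exists_mvPolynomial_near_of_continuousOn {σ : Type*} {K : Set (EuclideanSpace ℝ σ)}
    (hK : IsCompact K) {f : EuclideanSpace ℝ σ → ℝ} (hf : ContinuousOn f K) {ε : ℝ} (hε : 0 < ε) :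
    ∃ p : MvPolynomial σ ℝ, ∀ u ∈ K, ‖eval u p - f u‖ < ε := by
  have : CompactSpace K := isCompact_iff_compactSpace.1 hK
  let coord (i : σ) : C(K, ℝ) := ⟨fun u ↦ u.1 i, by fun_prop⟩
  have aeval_coord (p : MvPolynomial σ ℝ) (u : K) : aeval coord p u = eval u.1 p :=
    comp_aeval_apply _ (ContinuousMap.evalAlgHom ℝ ℝ u) p
  have hsep : (aeval coord : MvPolynomial σ ℝ →ₐ[ℝ] C(K, ℝ)).range.SeparatesPoints := by
    intro u v huv
    obtain ⟨i, hi⟩ : ∃ i, u.1 i ≠ v.1 i := by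
      by_contra! h
      exact huv (Subtype.ext (PiLp.ext h))
    exact ⟨coord i, ⟨coord i, ⟨X i, aeval_X _ i⟩, rfl⟩, hi⟩
  obtain ⟨⟨_, p, rfl⟩, hp⟩ := ContinuousMap.exists_mem_subalgebra_near_continuous_of_separatesPoints
    _ hsep (fun u : K ↦ f u) (continuousOn_iff_continuous_domRestrict.1 hf) ε hε
  exact ⟨p, fun u hu ↦ aeval_coord p ⟨u, hu⟩ ▸ hp ⟨u, hu⟩⟩

theorem exists_mem_sphere_eq_zero_of_odd {σ : Type*} [Fintype σ]
    {F : EuclideanSpace ℝ (Option σ) → σ → ℝ} (hF : ContinuousOn F (sphere 0 1))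
    (hodd : ∀ u ∈ sphere 0 1, F (-u) = -F u) : ∃ u ∈ sphere 0 1, F u = 0 := by
  refine exists_eq_zero_of_forall_exists_norm_lt (isCompact_sphere _ _) hF fun ε hε ↦ ?_
  choose p hp using fun i ↦ exists_mvPolynomial_near_of_continuousOn (isCompact_sphere _ _)
    (continuousOn_pi.1 hF i) hε
  choose d hd q hq eval_q using fun i ↦ exists_isHomogeneous_eval_eq_odd_part (p i)
  obtain ⟨u, hu, hqu⟩ := exists_mem_sphere_forall_eval_eq_zero hd hq
  refine ⟨u, hu, (pi_norm_lt_iff hε).2 fun i ↦ ?_⟩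
  have hpu := hp i u hu
  have hpneg := hp i (-u) (by simpa using hu)
  have heven := eval_q i u hu
  rw [hqu, mul_zero, eq_comm, sub_eq_zero] at heven
  rw [hodd u hu, Pi.neg_apply, ← heven] at hpneg
  rw [Real.norm_eq_abs, abs_lt] at *
  constructor <;> linarith

theorem exists_injective_linearMap_of_card_lt_rank {E ι : Type*} [AddCommGroup E] [Module ℝ E]
    [Fintype ι] (hι : (Fintype.card ι : Cardinal) < Module.rank ℝ E) :
    ∃ L : EuclideanSpace ℝ (Option ι) →ₗ[ℝ] E, Function.Injective L := by
  refine lift_rank_le_iff_exists_linearMap.1 ?_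
  rw [← Module.finrank_eq_rank, finrank_euclideanSpace, Fintype.card_option, Cardinal.lift_natCast,
    Nat.cast_add_one, Cardinal.natCast_add_one_le_iff, Cardinal.nat_lt_lift_iff]
  exact hι

theorem exists_mem_sphere_eq_zero_of_odd_of_card_lt_rank {E ι : Type*} [NormedAddCommGroup E]
    [NormedSpace ℝ E] [Fintype ι] (hι : (Fintype.card ι : Cardinal) < Module.rank ℝ E)
    {F : E → ι → ℝ} (hF : ContinuousOn F (sphere 0 1))
    (hodd : ∀ v ∈ sphere (0 : E) 1, F (-v) = -F v) : ∃ v ∈ sphere (0 : E) 1, F v = 0 := by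
  obtain ⟨L, hL⟩ := exists_injective_linearMap_of_card_lt_rank hι
  let proj (u : EuclideanSpace ℝ (Option ι)) : E := ‖L u‖⁻¹ • L u
  have L_ne_zero : ∀ u ∈ sphere 0 1, L u ≠ 0 := fun u hu ↦
    (map_ne_zero_iff L hL).2 (ne_zero_of_mem_unit_sphere ⟨u, hu⟩)
  have proj_mem : ∀ u ∈ sphere 0 1, proj u ∈ sphere 0 1 := fun u hu ↦
    mem_sphere_zero_iff_norm.2 (norm_smul_inv_norm (L_ne_zero u hu))
  have hLcont : Continuous L := L.continuous_of_finiteDimensional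
  have hproj : ContinuousOn proj (sphere 0 1) :=
    (hLcont.norm.continuousOn.inv₀ fun u hu ↦ norm_ne_zero_iff.2 (L_ne_zero u hu)).smul
      hLcont.continuousOn
  have proj_neg (u) : proj (-u) = -proj u := by simp only [proj, map_neg, norm_neg, smul_neg]
  obtain ⟨u, hu, hFu⟩ := exists_mem_sphere_eq_zero_of_odd (hF.comp hproj proj_mem) fun u hu ↦ by
    simp only [Function.comp_apply, proj_neg, hodd _ (proj_mem u hu)]
  exact ⟨proj u, proj_mem u hu, hFu⟩

section Covering

open scoped Pointwise

theorem disjoint_closure_neg {X : Type*} [TopologicalSpace X] [Neg X] {A C : Set X}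
    (hC : A ∪ -A ⊆ C) (hA : IsClosed {x : C | (x : X) ∈ A}) (hdisj : Disjoint A (-A)) :
    Disjoint (closure A) (-A) := by
  obtain ⟨Z, hZ, hZA⟩ := isClosed_induced_iff.1 hA
  have mem_Z_iff {x : X} (hx : x ∈ C) : x ∈ Z ↔ x ∈ A := Set.ext_iff.1 hZA ⟨x, hx⟩
  have closure_subset : closure A ⊆ Z :=
    closure_minimal (fun a ha ↦ (mem_Z_iff (hC (.inl ha))).2 ha) hZ
  exact Set.disjoint_left.2 fun x hx hneg ↦
    Set.disjoint_left.1 hdisj ((mem_Z_iff (hC (.inr hneg))).1 (closure_subset hx)) hneg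

variable {E : Type*} [SeminormedAddCommGroup E]

/-- The difference of the distances to `-A` and to `A`: an odd function of `v`, positive on `A` away
from the closure of `-A`. If `A` is empty, it is zero because `infDist v ∅ = 0`. -/
noncomputable def antipodalDist (A : Set E) (v : E) : ℝ := infDist v (-A) - infDist v A

theorem antipodalDist_neg (A : Set E) (v : E) : antipodalDist A (-v) = -antipodalDist A v := by
  have infDist_neg_neg (B : Set E) : infDist (-v) (-B) = infDist v B := by
    rw [← Set.image_neg_eq_neg, infDist_image (isometry_neg (G := E))]
  rw [antipodalDist, antipodalDist, infDist_neg_neg, ← infDist_neg_neg (-A), neg_neg, neg_sub]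

theorem continuous_antipodalDist (A : Set E) : Continuous (antipodalDist A) :=
  (continuous_infDist_pt _).sub (continuous_infDist_pt _)

theorem antipodalDist_ne_zero {A : Set E} (hA : Disjoint (closure A) (-A)) {v : E}
    (hv : v ∈ A ∪ -A) : antipodalDist A v ≠ 0 := by
  wlog hvA : v ∈ A generalizing v
  · rw [← neg_ne_zero, ← antipodalDist_neg]
    exact this (.inl (hv.resolve_left hvA)) (hv.resolve_left hvA)
  have hnot : v ∉ closure (-A) := fun h ↦
    hA.ne_of_mem (by rwa [← Set.mem_neg, neg_closure]) (Set.neg_mem_neg.2 hvA) rfl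
  rw [antipodalDist, infDist_zero_of_mem hvA, sub_zero]
  exact (infDist_pos_iff_notMem_closure ⟨-v, Set.neg_mem_neg.2 hvA⟩).1 hnot |>.ne'

end Covering

theorem stmt_0_general {E ι : Type*} [NormedAddCommGroup E] [NormedSpace ℝ E] [Fintype ι]
    {C A : ι → Set E} (hcover : {v : E | ‖v‖ = 1} ⊆ ⋃ i, C i)
    (hA_closed : ∀ i, IsClosed {x : C i | (x : E) ∈ A i})
    (hA_union : ∀ i, C i = A i ∪ Neg.neg '' A i) (hA_disj : ∀ i, A i ∩ Neg.neg '' A i = ∅) :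
    Module.rank ℝ E ≤ Fintype.card ι := by
  simp only [Set.image_neg_eq_neg, ← Set.disjoint_iff_inter_eq_empty] at hA_union hA_disj
  by_contra! hlt
  obtain ⟨v, hv, hzero⟩ := exists_mem_sphere_eq_zero_of_odd_of_card_lt_rank hlt
    (F := fun v i ↦ antipodalDist (A i) v)
    (continuous_pi fun i ↦ continuous_antipodalDist (A i)).continuousOn
    fun v _ ↦ funext fun i ↦ antipodalDist_neg (A i) v
  obtain ⟨i, hi⟩ := Set.mem_iUnion.1 (hcover (mem_sphere_zero_iff_norm.1 hv))
  refine antipodalDist_ne_zero ?_ (hA_union i ▸ hi) (congrFun hzero i)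
  exact disjoint_closure_neg (hA_union i).ge (hA_closed i) (hA_disj i)

/-- Borsuk–Ulam-type lemma (Sévennec): if the unit sphere of a finite-dimensional real
normed space is covered by `k` antipodally invariant sets, each of which splits as a
relatively clopen set together with its antipodal image, then the dimension is at most `k`. -/
theorem stmt_0 (E : Type*) [NormedAddCommGroup E] [NormedSpace ℝ E] [FiniteDimensional ℝ E]
    (k : ℕ) (C A : Fin k → Set E)
    (hC_sub : ∀ i, C i ⊆ {v : E | ‖v‖ = 1})
    (hcover : {v : E | ‖v‖ = 1} ⊆ ⋃ i, C i)
    (hinv : ∀ i, ∀ v ∈ C i, -v ∈ C i)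
    (hA_sub : ∀ i, A i ⊆ C i)
    (hA_clopen : ∀ i, IsClopen {x : (C i) | (x : E) ∈ A i})
    (hA_union : ∀ i, C i = A i ∪ (Neg.neg '' A i))
    (hA_disj : ∀ i, A i ∩ (Neg.neg '' A i) = ∅) :
    Module.finrank ℝ E ≤ k :=
  Module.finrank_le_of_rank_le <| by
    simpa using stmt_0_general hcover (fun i ↦ (hA_clopen i).1) hA_union hA_disj
end

section
/- For every continuously differentiable function φ : ℝ² → ℝ with compact support contained in the open upper half-plane ℝ × (0, ∞), one has ∫∫ ((∂φ/∂x)(x,y)² + (∂φ/∂y)(x,y)²) dx dy ≥ (1/4) ∫∫ φ(x,y)²/y² dx dy. -/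
open MeasureTheory

/-!
Write `φ = ℓ • ψ` with `ℓ` linear. Integrating `∂ᵥ(ℓ ‖ψ‖²)` to zero gives
`∫ ⟪ψ, ∂ᵥφ⟫ = (ℓ v / 2) ∫ ‖ψ‖²`, so expanding `0 ≤ ∫ ‖∂ᵥφ - (ℓ v / 2) ψ‖²` yields Hardy's inequality
`(ℓ v / 2)² ∫ ‖ψ‖² ≤ ∫ ‖∂ᵥφ‖²`. On the half-plane, with `ℓ (x, y) = y`, the direction
`v = (0, 1)` gives the constant `1 / 4`, and `v = (1, 0)` adds `0` to it.
-/

section Hardy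

open scoped RealInnerProductSpace

variable {E F : Type*} [NormedAddCommGroup E] [NormedAddCommGroup F]

lemma contDiff_inv_smul_of_tsupport_subset {𝕜 : Type*} [NontriviallyNormedField 𝕜]
    [NormedSpace 𝕜 E] [NormedSpace 𝕜 F] {n : WithTop ℕ∞} {g : E → 𝕜} {f : E → F}
    (hg : ContDiff 𝕜 n g) (hf : ContDiff 𝕜 n f) (hsupp : tsupport f ⊆ {x | g x ≠ 0}) :
    ContDiff 𝕜 n fun x ↦ (g x)⁻¹ • f x :=
  contMDiff_iff_contDiff.mp <| contMDiff_of_tsupport fun _ hx ↦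
    ((hg.contDiffAt.inv (hsupp (tsupport_smul_subset_right _ _ hx))).smul
      hf.contDiffAt).contMDiffAt

lemma fderiv_clm_smul_apply {𝕜 : Type*} [NontriviallyNormedField 𝕜] [NormedSpace 𝕜 E]
    [NormedSpace 𝕜 F] (ℓ : E →L[𝕜] 𝕜) {ψ : E → F} {x : E} (hψ : DifferentiableAt 𝕜 ψ x) (v : E) :
    fderiv 𝕜 (fun y ↦ ℓ y • ψ y) x v = ℓ x • fderiv 𝕜 ψ x v + ℓ v • ψ x := by
  simp [fderiv_fun_smul ℓ.differentiableAt hψ]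

lemma hasCompactSupport_norm_sq {X : Type*} [TopologicalSpace X] {f : X → F}
    (hsupp : HasCompactSupport f) : HasCompactSupport fun x ↦ ‖f x‖ ^ 2 :=
  hsupp.comp_left (g := fun y : F ↦ ‖y‖ ^ 2) (by simp)

lemma integrable_norm_sq_of_hasCompactSupport {X : Type*} [TopologicalSpace X]
    [MeasurableSpace X] [OpensMeasurableSpace X] {μ : Measure X} [IsFiniteMeasureOnCompacts μ]
    {f : X → F} (hf : Continuous f) (hsupp : HasCompactSupport f) :
    Integrable (fun x ↦ ‖f x‖ ^ 2) μ :=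
  (hf.norm.pow 2).integrable_of_hasCompactSupport (hasCompactSupport_norm_sq hsupp)

lemma integrable_norm_sq_fderiv_apply {𝕜 : Type*} [NontriviallyNormedField 𝕜] [NormedSpace 𝕜 E]
    [NormedSpace 𝕜 F] [MeasurableSpace E] [OpensMeasurableSpace E] {μ : Measure E}
    [IsFiniteMeasureOnCompacts μ] {f : E → F} (hf : ContDiff 𝕜 1 f)
    (hsupp : HasCompactSupport f) (v : E) : Integrable (fun x ↦ ‖fderiv 𝕜 f x v‖ ^ 2) μ :=
  integrable_norm_sq_of_hasCompactSupport
    ((hf.continuous_fderiv one_ne_zero).clm_apply continuous_const) (hsupp.fderiv_apply 𝕜 v)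

variable [NormedSpace ℝ E] [FiniteDimensional ℝ E] [MeasurableSpace E] [BorelSpace E]
  {μ : Measure E} [μ.IsAddHaarMeasure]

lemma integral_clm_smul_fderiv_eq_neg [NormedSpace ℝ F] (ℓ : E →L[ℝ] ℝ) {g : E → F}
    (hg : ContDiff ℝ 1 g) (hsupp : HasCompactSupport g) (v : E) :
    ∫ x, ℓ x • fderiv ℝ g x v ∂μ = -(ℓ v • ∫ x, g x ∂μ) := by
  have hg' : Continuous fun x ↦ fderiv ℝ g x v :=
    (hg.continuous_fderiv one_ne_zero).clm_apply continuous_const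
  rw [integral_smul_fderiv_eq_neg_fderiv_smul_of_integrable]
  · simp [integral_smul]
  · simp only [ContinuousLinearMap.fderiv]
    exact (hg.continuous.integrable_of_hasCompactSupport hsupp).smul (ℓ v)
  · exact (ℓ.continuous.smul hg').integrable_of_hasCompactSupport (hsupp.fderiv_apply ℝ v).smul_left
  · exact (ℓ.continuous.smul hg.continuous).integrable_of_hasCompactSupport hsupp.smul_left
  · exact fun _ _ ↦ ℓ.differentiableAt
  · exact fun x _ ↦ hg.differentiable one_ne_zero x

variable [InnerProductSpace ℝ F]

lemma integral_inner_fderiv_clm_smul (ℓ : E →L[ℝ] ℝ) {ψ : E → F}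
    (hψ : ContDiff ℝ 1 ψ) (hsupp : HasCompactSupport ψ) (v : E) :
    ∫ x, ⟪ψ x, fderiv ℝ (fun y ↦ ℓ y • ψ y) x v⟫ ∂μ = ℓ v / 2 * ∫ x, ‖ψ x‖ ^ 2 ∂μ := by
  have hdiff : Differentiable ℝ ψ := hψ.differentiable one_ne_zero
  have hsupp_sq : HasCompactSupport fun x ↦ ‖ψ x‖ ^ 2 := hasCompactSupport_norm_sq hsupp
  have hcont_sq' : Continuous fun x ↦ fderiv ℝ (fun y ↦ ‖ψ y‖ ^ 2) x v :=
    ((hψ.norm_sq ℝ).continuous_fderiv one_ne_zero).clm_apply continuous_const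
  have hint : Integrable (fun x ↦ ℓ x • fderiv ℝ (fun y ↦ ‖ψ y‖ ^ 2) x v) μ :=
    (ℓ.continuous.smul hcont_sq').integrable_of_hasCompactSupport
      (hsupp_sq.fderiv_apply ℝ v).smul_left
  have hpointwise (x : E) : ⟪ψ x, fderiv ℝ (fun y ↦ ℓ y • ψ y) x v⟫ =
      (1 / 2) * (ℓ x • fderiv ℝ (fun y ↦ ‖ψ y‖ ^ 2) x v) + ℓ v * ‖ψ x‖ ^ 2 := by
    rw [fderiv_clm_smul_apply ℓ (hdiff x), (hdiff x).hasFDerivAt.norm_sq.fderiv]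
    simp only [inner_add_right, inner_smul_right, real_inner_self_eq_norm_sq, smul_apply,
      ContinuousLinearMap.comp_apply, innerSL_apply_apply, nsmul_eq_mul, Nat.cast_ofNat,
      smul_eq_mul]
    ring
  simp_rw [hpointwise]
  rw [integral_add (hint.const_mul _)
      ((integrable_norm_sq_of_hasCompactSupport hψ.continuous hsupp).const_mul _),
    integral_const_mul, integral_const_mul,
    integral_clm_smul_fderiv_eq_neg ℓ (hψ.norm_sq ℝ) hsupp_sq, smul_eq_mul]
  ring

lemma integral_norm_sq_le_integral_norm_sq_fderiv_clm_smul (ℓ : E →L[ℝ] ℝ) {ψ : E → F}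
    (hψ : ContDiff ℝ 1 ψ) (hsupp : HasCompactSupport ψ) (v : E) :
    (ℓ v / 2) ^ 2 * ∫ x, ‖ψ x‖ ^ 2 ∂μ ≤
      ∫ x, ‖fderiv ℝ (fun y ↦ ℓ y • ψ y) x v‖ ^ 2 ∂μ := by
  set u' : E → F := fun x ↦ fderiv ℝ (fun y ↦ ℓ y • ψ y) x v
  have hu' : Continuous u' :=
    ((ℓ.contDiff.smul hψ).continuous_fderiv one_ne_zero).clm_apply continuous_const
  have hint_u' : Integrable (fun x ↦ ‖u' x‖ ^ 2) μ :=
    integrable_norm_sq_fderiv_apply (ℓ.contDiff.smul hψ) hsupp.smul_left v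
  have hint_ψ : Integrable (fun x ↦ ‖ψ x‖ ^ 2) μ :=
    integrable_norm_sq_of_hasCompactSupport hψ.continuous hsupp
  have hint_inner : Integrable (fun x ↦ ⟪ψ x, u' x⟫) μ :=
    (hψ.continuous.inner hu').integrable_of_hasCompactSupport <|
      hsupp.mono fun x hx h ↦ hx (by simp [h])
  have hint_sub : Integrable (fun x ↦ ‖u' x‖ ^ 2 - ℓ v * ⟪ψ x, u' x⟫) μ :=
    hint_u'.sub (hint_inner.const_mul _)
  have hexpand (x : E) : ‖u' x - (ℓ v / 2) • ψ x‖ ^ 2 =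
      ‖u' x‖ ^ 2 - ℓ v * ⟪ψ x, u' x⟫ + (ℓ v / 2) ^ 2 * ‖ψ x‖ ^ 2 := by
    rw [norm_sub_sq_real, inner_smul_right, real_inner_comm, norm_smul, mul_pow, Real.norm_eq_abs,
      sq_abs]
    ring
  have hsquare : 0 ≤ ∫ x, ‖u' x - (ℓ v / 2) • ψ x‖ ^ 2 ∂μ := integral_nonneg fun _ ↦ by positivity
  simp_rw [hexpand] at hsquare
  rw [integral_add hint_sub (hint_ψ.const_mul _),
    integral_sub hint_u' (hint_inner.const_mul _), integral_const_mul, integral_const_mul,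
    integral_inner_fderiv_clm_smul ℓ hψ hsupp] at hsquare
  linarith

theorem hardy_inequality_fderiv_apply (ℓ : E →L[ℝ] ℝ) {φ : E → F} (hφ : ContDiff ℝ 1 φ)
    (hsupp : HasCompactSupport φ) (hℓ : tsupport φ ⊆ {x | ℓ x ≠ 0}) (v : E) :
    (ℓ v / 2) ^ 2 * ∫ x, ‖φ x‖ ^ 2 / ℓ x ^ 2 ∂μ ≤ ∫ x, ‖fderiv ℝ φ x v‖ ^ 2 ∂μ := by
  have hquot : ContDiff ℝ 1 fun x ↦ (ℓ x)⁻¹ • φ x :=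
    contDiff_inv_smul_of_tsupport_subset ℓ.contDiff hφ hℓ
  have hcancel : (fun x ↦ ℓ x • (ℓ x)⁻¹ • φ x) = φ := by
    funext x
    by_cases hx : x ∈ tsupport φ
    · exact smul_inv_smul₀ (hℓ hx) (φ x)
    · simp [image_eq_zero_of_notMem_tsupport hx]
  simpa [hcancel, norm_smul, mul_pow, div_eq_inv_mul] using
    integral_norm_sq_le_integral_norm_sq_fderiv_clm_smul (μ := μ) ℓ hquot hsupp.smul_left v

theorem stmt_1_general {ι : Type*} [Fintype ι] (ℓ : E →L[ℝ] ℝ) (v : ι → E) {φ : E → F}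
    (hφ : ContDiff ℝ 1 φ) (hsupp : HasCompactSupport φ) (hℓ : tsupport φ ⊆ {x | ℓ x ≠ 0}) :
    (∑ i, (ℓ (v i) / 2) ^ 2) * ∫ x, ‖φ x‖ ^ 2 / ℓ x ^ 2 ∂μ ≤
      ∫ x, ∑ i, ‖fderiv ℝ φ x (v i)‖ ^ 2 ∂μ := by
  rw [Finset.sum_mul,
    integral_finsetSum _ fun i _ ↦ integrable_norm_sq_fderiv_apply hφ hsupp (v i)]
  gcongr with i
  exact hardy_inequality_fderiv_apply ℓ hφ hsupp hℓ (v i)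

end Hardy

/-- The bottom of the spectrum of the hyperbolic plane is at least 1/4: for every compactly
supported C¹ function on the upper half-plane, the (Euclidean = hyperbolic) Dirichlet energy
dominates 1/4 times the hyperbolic L² norm `∫∫ φ²/y²`. -/
theorem stmt_1 (φ : ℝ × ℝ → ℝ) (hφ : ContDiff ℝ 1 φ) (hsupp : HasCompactSupport φ)
    (hupper : tsupport φ ⊆ {p : ℝ × ℝ | 0 < p.2}) :
    (1 / 4) * ∫ p : ℝ × ℝ, φ p ^ 2 / p.2 ^ 2 ≤
      ∫ p : ℝ × ℝ, (fderiv ℝ φ p (1, 0) ^ 2 + fderiv ℝ φ p (0, 1) ^ 2) := by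
  convert stmt_1_general (μ := volume) (.snd ℝ ℝ ℝ) ![(1, 0), (0, 1)] hφ hsupp
    fun p hp ↦ (hupper hp).ne' using 2 <;> norm_num [Fin.sum_univ_two]
end

section
/- For every continuously differentiable function φ : ℝ → ℝ with compact support contained in the open half-line (0, ∞), one has ∫₀^∞ φ'(y)² dy ≥ (1/4) ∫₀^∞ φ(y)²/y² dy. -/
open MeasureTheory

/-!
Expanding `0 ≤ ‖f' - w • f‖²` gives `(w ‖f‖²)' ≤ ‖f'‖² + (w' + w²) ‖f‖²` for every real weight `w`.
On `[0, b]` take `w x = 1 / (2 (x + ε))`, a positive solution of the Riccati equation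
`w' + w² = -1 / (4 (x + ε)²)`: the boundary terms then have the right sign, and the inequality
follows by letting `b → ∞` and `ε → 0` with Fatou's lemma. The shift by `ε` keeps `w` bounded, so
that nothing has to be known about how fast `f` vanishes at `0`.
-/

open Set Filter Topology

section Fatou

variable {α : Type*} [MeasurableSpace α] {μ : Measure α}

theorem integrable_and_integral_le_of_tendsto_of_nonneg {F : ℕ → α → ℝ} {f : α → ℝ} {C : ℝ}
    (hF : ∀ n, Integrable (F n) μ) (hF_nonneg : ∀ n, 0 ≤ᵐ[μ] F n)
    (hlim : ∀ᵐ x ∂μ, Tendsto (F · x) atTop (𝓝 (f x))) (hC : ∀ n, ∫ x, F n x ∂μ ≤ C) :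
    Integrable f μ ∧ ∫ x, f x ∂μ ≤ C := by
  have hf_meas : AEStronglyMeasurable f μ :=
    aestronglyMeasurable_of_tendsto_ae atTop (fun n => (hF n).aestronglyMeasurable) hlim
  have hf_nonneg : 0 ≤ᵐ[μ] f := by
    filter_upwards [hlim, ae_all_iff.2 hF_nonneg] with x hx hx_nonneg
    exact ge_of_tendsto' hx hx_nonneg
  have lintegral_le : ∫⁻ x, ENNReal.ofReal (f x) ∂μ ≤ ENNReal.ofReal C :=
    calc ∫⁻ x, ENNReal.ofReal (f x) ∂μ
        = ∫⁻ x, liminf (fun n => ENNReal.ofReal (F n x)) atTop ∂μ :=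
          lintegral_congr_ae <| hlim.mono fun x hx =>
            (ENNReal.tendsto_ofReal hx).liminf_eq.symm
      _ ≤ liminf (fun n => ∫⁻ x, ENNReal.ofReal (F n x) ∂μ) atTop :=
          lintegral_liminf_le' fun n => (hF n).aemeasurable.ennreal_ofReal
      _ ≤ ENNReal.ofReal C := by
          refine liminf_le_of_frequently_le' (.of_forall fun n => ?_)
          rw [← ofReal_integral_eq_lintegral_ofReal (hF n) (hF_nonneg n)]
          exact ENNReal.ofReal_le_ofReal (hC n)
  have hC_nonneg : 0 ≤ C := (integral_nonneg_of_ae (hF_nonneg 0)).trans (hC 0)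
  refine ⟨⟨hf_meas, ?_⟩, ?_⟩
  · rw [hasFiniteIntegral_iff_ofReal hf_nonneg]
    exact lintegral_le.trans_lt ENNReal.ofReal_lt_top
  · rw [integral_eq_lintegral_of_nonneg_ae hf_nonneg hf_meas]
    exact ENNReal.toReal_le_of_le_ofReal hC_nonneg lintegral_le

end Fatou

section Hardy

theorem hasDerivAt_inv_two_mul_add {x ε : ℝ} (hx : x + ε ≠ 0) :
    HasDerivAt (fun x => (2 * (x + ε))⁻¹) (-2 / (2 * (x + ε)) ^ 2) x := by
  have affine : HasDerivAt (fun x => 2 * (x + ε)) 2 x := by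
    simpa only [mul_one] using ((hasDerivAt_id' x).add_const ε).const_mul 2
  exact affine.inv (mul_ne_zero two_ne_zero hx)

theorem tendsto_div_add_one_div_nat_sq (c : ℝ) {x : ℝ} (hx : x ≠ 0) :
    Tendsto (fun n : ℕ => c / (x + 1 / ((n : ℝ) + 1)) ^ 2) atTop (𝓝 (c / x ^ 2)) := by
  have shift : Tendsto (fun n : ℕ => x + 1 / ((n : ℝ) + 1)) atTop (𝓝 x) := by
    simpa only [add_zero] using tendsto_one_div_add_atTop_nhds_zero_nat.const_add x
  exact tendsto_const_nhds.div (shift.pow 2) (pow_ne_zero 2 hx)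

variable {E : Type*} [NormedAddCommGroup E] {f f' : ℝ → E}

theorem continuousOn_norm_sq_div_add_sq {b ε : ℝ} (hε : 0 < ε) (hf : ContinuousOn f (Icc 0 b)) :
    ContinuousOn (fun x => ‖f x‖ ^ 2 / (x + ε) ^ 2) (Icc 0 b) :=
  (hf.norm.pow 2).div (by fun_prop) fun x hx => (pow_pos (add_pos_of_nonneg_of_pos hx.1 hε) 2).ne'

theorem integrable_norm_deriv_sq_of_hasCompactSupport [NormedSpace ℝ E] (hf : ContDiff ℝ 1 f)
    (hsupp : HasCompactSupport f) : Integrable fun x => ‖deriv f x‖ ^ 2 := by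
  have sq_cont : Continuous fun x => ‖deriv f x‖ ^ 2 := (hf.continuous_deriv le_rfl).norm.pow 2
  have sq_supp : HasCompactSupport fun x => ‖deriv f x‖ ^ 2 :=
    hsupp.deriv.comp_left (g := fun v => ‖v‖ ^ 2) (by simp)
  exact sq_cont.integrable_of_hasCompactSupport sq_supp

variable [InnerProductSpace ℝ E]

theorem two_mul_mul_inner_le_norm_sq_add (c : ℝ) (u v : E) :
    2 * c * inner ℝ u v ≤ ‖v‖ ^ 2 + c ^ 2 * ‖u‖ ^ 2 := by
  have expand : ‖v - c • u‖ ^ 2 = ‖v‖ ^ 2 - 2 * c * inner ℝ u v + c ^ 2 * ‖u‖ ^ 2 := by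
    rw [norm_sub_sq_real, real_inner_smul_right, norm_smul, mul_pow, Real.norm_eq_abs, sq_abs,
      real_inner_comm]
    ring
  linarith [sq_nonneg ‖v - c • u‖]

theorem mul_norm_sq_sub_le_integral_riccati {w w' : ℝ → ℝ} {a b : ℝ} (hab : a ≤ b)
    (hf : ContinuousOn f (Icc a b)) (hf' : ∀ x ∈ Ioo a b, HasDerivAt f (f' x) x)
    (hw : ContinuousOn w (Icc a b)) (hw' : ∀ x ∈ Ioo a b, HasDerivAt w (w' x) x)
    (hint : IntegrableOn (fun x => ‖f' x‖ ^ 2 + (w' x + w x ^ 2) * ‖f x‖ ^ 2) (Icc a b)) :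
    w b * ‖f b‖ ^ 2 - w a * ‖f a‖ ^ 2 ≤
      ∫ x in a..b, ‖f' x‖ ^ 2 + (w' x + w x ^ 2) * ‖f x‖ ^ 2 := by
  refine intervalIntegral.sub_le_integral_of_hasDeriv_right_of_le hab (hw.mul (hf.norm.pow 2))
    (fun x hx => ((hw' x hx).mul (hf' x hx).norm_sq).hasDerivWithinAt) hint fun x _ => ?_
  linarith [two_mul_mul_inner_le_norm_sq_add (w x) (f x) (f' x)]

theorem integral_norm_sq_div_add_sq_le {b ε : ℝ} (hb : 0 ≤ b) (hε : 0 < ε)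
    (hf : ContinuousOn f (Icc 0 b)) (hf' : ∀ x ∈ Ioo 0 b, HasDerivAt f (f' x) x) (hf0 : f 0 = 0)
    (hint : IntegrableOn (fun x => ‖f' x‖ ^ 2) (Icc 0 b)) :
    (1 / 4) * ∫ x in 0..b, ‖f x‖ ^ 2 / (x + ε) ^ 2 ≤ ∫ x in 0..b, ‖f' x‖ ^ 2 := by
  have add_ne_zero (x : ℝ) (hx : x ∈ Icc 0 b) : x + ε ≠ 0 := (add_pos_of_nonneg_of_pos hx.1 hε).ne'
  have quotient_int : IntegrableOn (fun x => ‖f x‖ ^ 2 / (x + ε) ^ 2) (Icc 0 b) :=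
    (continuousOn_norm_sq_div_add_sq hε hf).integrableOn_Icc
  have riccati : EqOn
      (fun x => ‖f' x‖ ^ 2 + (-2 / (2 * (x + ε)) ^ 2 + (2 * (x + ε))⁻¹ ^ 2) * ‖f x‖ ^ 2)
      (fun x => ‖f' x‖ ^ 2 - (1 / 4) * (‖f x‖ ^ 2 / (x + ε) ^ 2)) (Icc 0 b) := fun x hx => by
    have hx_ne := add_ne_zero x hx
    beta_reduce
    field_simp
    ring
  have boundary_nonneg : 0 ≤ (2 * (b + ε))⁻¹ * ‖f b‖ ^ 2 := by positivity
  have square_le := mul_norm_sq_sub_le_integral_riccati hb hf hf'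
    (fun x hx => (hasDerivAt_inv_two_mul_add (add_ne_zero x hx)).continuousAt.continuousWithinAt)
    (fun x hx => hasDerivAt_inv_two_mul_add (add_ne_zero x (Ioo_subset_Icc_self hx)))
    ((hint.sub (quotient_int.const_mul (1 / 4))).congr_fun riccati.symm measurableSet_Icc)
  rw [← uIcc_of_le hb] at riccati hint quotient_int
  rw [intervalIntegral.integral_congr riccati, intervalIntegral.integral_sub hint.intervalIntegrable
    (quotient_int.intervalIntegrable.const_mul _), intervalIntegral.integral_const_mul, hf0,
    norm_zero] at square_le
  linarith

theorem setIntegral_Ioc_norm_sq_div_add_sq_le {b ε : ℝ} (hb : 0 ≤ b) (hε : 0 < ε)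
    (hf : ContinuousOn f (Ici 0)) (hf' : ∀ x ∈ Ioi 0, HasDerivAt f (f' x) x) (hf0 : f 0 = 0)
    (hint : IntegrableOn (fun x => ‖f' x‖ ^ 2) (Ioi 0)) :
    (1 / 4) * ∫ x in Ioc 0 b, ‖f x‖ ^ 2 / (x + ε) ^ 2 ≤ ∫ x in Ioi (0 : ℝ), ‖f' x‖ ^ 2 := by
  have hint_Icc : IntegrableOn (fun x => ‖f' x‖ ^ 2) (Icc 0 b) := by
    rw [integrableOn_Icc_iff_integrableOn_Ioc]
    exact hint.mono_set Ioc_subset_Ioi_self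
  have hardy := integral_norm_sq_div_add_sq_le hb hε (hf.mono Icc_subset_Ici_self)
    (fun x hx => hf' x hx.1) hf0 hint_Icc
  rw [intervalIntegral.integral_of_le hb, intervalIntegral.integral_of_le hb] at hardy
  exact hardy.trans <| setIntegral_mono_set hint (.of_forall fun x => sq_nonneg _)
    Ioc_subset_Ioi_self.eventuallyLE

theorem stmt_3_general (hf : ContinuousOn f (Ici 0)) (hf' : ∀ x ∈ Ioi 0, HasDerivAt f (f' x) x)
    (hf0 : f 0 = 0) (hint : IntegrableOn (fun x => ‖f' x‖ ^ 2) (Ioi 0)) :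
    IntegrableOn (fun x => ‖f x‖ ^ 2 / x ^ 2) (Ioi 0) ∧
      (1 / 4) * ∫ x in Ioi (0 : ℝ), ‖f x‖ ^ 2 / x ^ 2 ≤ ∫ x in Ioi (0 : ℝ), ‖f' x‖ ^ 2 := by
  let F (n : ℕ) : ℝ → ℝ := (Iic (n : ℝ)).indicator fun x => ‖f x‖ ^ 2 / (x + 1 / ((n : ℝ) + 1)) ^ 2
  have F_int (n : ℕ) : IntegrableOn (F n) (Ioi 0) := by
    rw [integrableOn_indicator_iff measurableSet_Iic, inter_comm, Ioi_inter_Iic]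
    exact (continuousOn_norm_sq_div_add_sq Nat.one_div_pos_of_nat
      (hf.mono Icc_subset_Ici_self)).integrableOn_Icc.mono_set Ioc_subset_Icc_self
  have F_nonneg (n : ℕ) (x : ℝ) : 0 ≤ F n x := indicator_nonneg (fun x _ => by positivity) x
  have F_tendsto (x : ℝ) (hx : x ∈ Ioi 0) : Tendsto (F · x) atTop (𝓝 (‖f x‖ ^ 2 / x ^ 2)) := by
    refine (tendsto_div_add_one_div_nat_sq (‖f x‖ ^ 2) (ne_of_gt hx)).congr' ?_
    filter_upwards [tendsto_natCast_atTop_atTop.eventually_ge_atTop x] with n hn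
    simp only [F, indicator_of_mem (mem_Iic.2 hn)]
  have F_le (n : ℕ) : ∫ x in Ioi 0, F n x ≤ 4 * ∫ x in Ioi 0, ‖f' x‖ ^ 2 := by
    rw [setIntegral_indicator measurableSet_Iic, Ioi_inter_Iic]
    linarith [setIntegral_Ioc_norm_sq_div_add_sq_le n.cast_nonneg
      (Nat.one_div_pos_of_nat (n := n)) hf hf' hf0 hint]
  obtain ⟨quotient_int, integral_le⟩ := integrable_and_integral_le_of_tendsto_of_nonneg F_int
    (fun n => .of_forall (F_nonneg n)) (ae_restrict_of_forall_mem measurableSet_Ioi F_tendsto) F_le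
  exact ⟨quotient_int, by linarith⟩

end Hardy

/-- One-dimensional Hardy inequality: for a C¹ function with compact support in `(0, ∞)`,
`∫₀^∞ φ'(y)² dy ≥ (1/4) ∫₀^∞ φ(y)²/y² dy`. -/
theorem stmt_3 (φ : ℝ → ℝ) (hφ : ContDiff ℝ 1 φ) (hsupp : HasCompactSupport φ)
    (hpos : tsupport φ ⊆ Set.Ioi 0) :
    (1 / 4) * ∫ y in Set.Ioi (0 : ℝ), φ y ^ 2 / y ^ 2 ≤
      ∫ y in Set.Ioi (0 : ℝ), deriv φ y ^ 2 := by
  have φ_zero : φ 0 = 0 := image_eq_zero_of_notMem_tsupport fun h => lt_irrefl (0 : ℝ) (hpos h)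
  simpa only [Real.norm_eq_abs, sq_abs] using (stmt_3_general hφ.continuous.continuousOn
    (fun y _ => (hφ.differentiable one_ne_zero y).hasDerivAt) φ_zero
    (integrable_norm_deriv_sq_of_hasCompactSupport hφ hsupp).integrableOn).2
end

section
/- Let f : ℝ² → ℝ be real analytic on a neighborhood of a point p, not identically zero on any neighborhood of p, and with f(p) = 0. Then there exist ε > 0, a nonnegative integer r, and 2r injective continuous paths γ₁, …, γ_{2r} : [0,1] → ℝ² with γ_i(0) = p for every i, such that the images γ_i((0,1]) are pairwise disjoint, do not contain p, and the zero set of f in the open ball B(p, ε) satisfies Z(f) ∩ B(p,ε) = ({p} ∪ ⋃_{i=1}^{2r} γ_i([0,1])) ∩ B(p,ε). In particular either p is an isolated zero of f (the case r = 0) or the nodal set of f near p is a union of an even number of arcs emanating from p. -/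
/-!
Choose a line through the point on which `f` does not vanish identically. In coordinates `(x, y)`
with that line as the `y`-axis, Weierstrass preparation turns the zero set of `f` into that of a
monic polynomial in `y` whose coefficients are analytic in `x`; the preparation theorem itself
follows by inverting a power series in `x` of operators on bounded coefficient sequences. Replacing
the polynomial by its radical over the field of germs of meromorphic functions makes all its roots
simple for small `x ≠ 0`. Simple real roots move continuously with `x`, so on either side of `x = 0`
they form ordered branches, and all of these tend to the point as `x → 0`. Non-real roots come in
conjugate pairs, so on both sides the number of branches has the parity of the degree: the total
number of arcs is even.
-/

namespace NodalSet

open Filter Topology Set Polynomial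

section DoubleSeries

open Finset.HasAntidiagonal (antidiagonal mem_antidiagonal)

variable {𝕜 F : Type*} [NontriviallyNormedField 𝕜] [NormedAddCommGroup F] [NormedSpace 𝕜 F]

/-- The coefficient of `x ^ i * y ^ (n - i)` in the homogeneous polynomial `p n` of two variables:
the sum of the values of `p n` at the families of basis vectors in which `(1, 0)` occurs `i` times
and `(0, 1)` occurs `n - i` times. -/
noncomputable def monomialCoeff (p : FormalMultilinearSeries 𝕜 (𝕜 × 𝕜) F) (n i : ℕ) : F :=
  ∑ s ∈ Finset.powersetCard i (Finset.univ : Finset (Fin n)),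
    p n (s.piecewise (fun _ => (1, 0)) fun _ => (0, 1))

lemma norm_monomialCoeff_le (p : FormalMultilinearSeries 𝕜 (𝕜 × 𝕜) F) (n i : ℕ) :
    ‖monomialCoeff p n i‖ ≤ n.choose i * ‖p n‖ := by
  have norm_term_le (s : Finset (Fin n)) :
      ‖p n (s.piecewise (fun _ => (1, 0)) fun _ => (0, 1))‖ ≤ ‖p n‖ := by
    refine ((p n).le_opNorm _).trans (mul_le_of_le_one_right (norm_nonneg _) ?_)
    refine Finset.prod_le_one (fun _ _ => norm_nonneg _) fun j _ => ?_
    by_cases hj : j ∈ s <;> simp [hj, Prod.norm_def]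
  calc ‖monomialCoeff p n i‖
      ≤ ∑ _s ∈ Finset.powersetCard i (Finset.univ : Finset (Fin n)), ‖p n‖ :=
        norm_sum_le_of_le _ fun s _ => norm_term_le s
    _ = n.choose i * ‖p n‖ := by simp

lemma apply_piecewise_eq_smul (p : FormalMultilinearSeries 𝕜 (𝕜 × 𝕜) F) (n : ℕ) (x y : 𝕜)
    (s : Finset (Fin n)) :
    p n (s.piecewise (fun _ => (x, 0)) fun _ => (0, y)) =
      (x ^ s.card * y ^ (n - s.card)) • p n (s.piecewise (fun _ => (1, 0)) fun _ => (0, 1)) := by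
  have piecewise_eq : (s.piecewise (fun _ => (x, 0)) fun _ => (0, y) : Fin n → 𝕜 × 𝕜) =
      fun i => s.piecewise (fun _ => x) (fun _ => y) i •
        (s.piecewise (fun _ => (1, 0)) fun _ => (0, 1) : Fin n → 𝕜 × 𝕜) i := by
    ext i <;> by_cases hi : i ∈ s <;> simp [hi]
  rw [piecewise_eq, ContinuousMultilinearMap.map_smul_univ, Finset.prod_piecewise]
  simp [← Finset.compl_eq_univ_sdiff, Finset.card_compl]

lemma apply_eq_sum_antidiagonal (p : FormalMultilinearSeries 𝕜 (𝕜 × 𝕜) F) (n : ℕ) (x y : 𝕜) :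
    p n (fun _ => (x, y)) =
      ∑ q ∈ antidiagonal n, (x ^ q.1 * y ^ q.2) • monomialCoeff p (q.1 + q.2) q.1 := by
  have split_xy : (fun _ : Fin n => (x, y)) = (fun _ => (x, 0)) + fun _ => (0, y) := by
    ext <;> simp
  rw [Finset.sum_congr rfl fun q hq => by rw [mem_antidiagonal.1 hq],
    Finset.Nat.sum_antidiagonal_eq_sum_range_succ_mk, split_xy,
    ContinuousMultilinearMap.map_add_univ,
    Finset.sum_congr rfl fun s _ => apply_piecewise_eq_smul p n x y s, ← Finset.powerset_univ,
    Finset.sum_powerset, Finset.card_univ, Fintype.card_fin]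
  refine Finset.sum_congr rfl fun i _ => ?_
  rw [monomialCoeff, Finset.smul_sum]
  exact Finset.sum_congr rfl fun s hs => by rw [(Finset.mem_powersetCard.1 hs).2]

lemma hasSum_sigma_antidiagonal {G : Type*} [AddCommMonoid G] [TopologicalSpace G]
    (u : ℕ × ℕ → G) (n : ℕ) :
    HasSum (fun q : antidiagonal n => u q) (∑ q ∈ antidiagonal n, u q) := by
  simpa only [Finset.univ_eq_attach, Finset.sum_attach] using
    hasSum_fintype fun q : antidiagonal n => u q

lemma summable_norm_monomialCoeff (p : FormalMultilinearSeries 𝕜 (𝕜 × 𝕜) F) {R : ℝ} (hR : 0 ≤ R)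
    (hp : Summable fun n => ‖p n‖ * R ^ n) :
    Summable fun q : ℕ × ℕ => ‖monomialCoeff p (q.1 + q.2) q.1‖ * (R / 2) ^ (q.1 + q.2) := by
  rw [← Finset.HasAntidiagonal.sigmaAntidiagonalEquivProd.summable_iff]
  refine (summable_sigma_of_nonneg fun _ => by dsimp; positivity).2
    ⟨fun n => (hasSum_fintype _).summable, ?_⟩
  refine hp.of_nonneg_of_le (fun n => tsum_nonneg fun _ => by dsimp; positivity) fun n => ?_
  calc _ = ∑ q ∈ antidiagonal n,
          ‖monomialCoeff p (q.1 + q.2) q.1‖ * (R / 2) ^ (q.1 + q.2) :=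
        (hasSum_sigma_antidiagonal _ n).tsum_eq
    _ ≤ ∑ q ∈ antidiagonal n, n.choose q.1 * ‖p n‖ * (R / 2) ^ n := by
        refine Finset.sum_le_sum fun q hq => ?_
        rw [mem_antidiagonal.1 hq]
        gcongr
        exact norm_monomialCoeff_le p n q.1
    _ = ((∑ i ∈ Finset.range n.succ, n.choose i : ℕ) : ℝ) * ‖p n‖ * (R / 2) ^ n := by
        rw [Finset.Nat.sum_antidiagonal_eq_sum_range_succ_mk, ← Finset.sum_mul, ← Finset.sum_mul]
        push_cast
        rfl
    _ = ‖p n‖ * R ^ n := by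
        rw [Nat.sum_range_choose, div_pow]
        push_cast
        field_simp

theorem exists_hasSum_double_series [CompleteSpace F] {g : 𝕜 × 𝕜 → F} (hg : AnalyticAt 𝕜 g 0) :
    ∃ (a : ℕ → ℕ → F) (r : ℝ), 0 < r ∧
      (Summable fun q : ℕ × ℕ => ‖a q.1 q.2‖ * r ^ (q.1 + q.2)) ∧
      ∀ x y, ‖x‖ < r → ‖y‖ < r →
        HasSum (fun q : ℕ × ℕ => (x ^ q.1 * y ^ q.2) • a q.1 q.2) (g (x, y)) := by
  obtain ⟨p, ρ, hp⟩ := hg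
  obtain ⟨R, hR, hRρ⟩ := ENNReal.lt_iff_exists_nnreal_btwn.1 hp.r_pos
  replace hR : 0 < (R : ℝ) := by exact_mod_cast hR
  have summable_coeff := summable_norm_monomialCoeff p R.coe_nonneg
    (p.summable_norm_mul_pow (hRρ.trans_le hp.r_le))
  refine ⟨fun i j => monomialCoeff p (i + j) i, R / 2, half_pos hR, summable_coeff,
    fun x y hx hy => ?_⟩
  have mem_ball : (x, y) ∈ Metric.eball (0 : 𝕜 × 𝕜) ρ := by
    refine lt_trans ?_ hRρ
    rw [edist_zero_right, ← ofReal_norm, ENNReal.ofReal_lt_coe_iff (norm_nonneg _), Prod.norm_def]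
    exact max_lt (by linarith) (by linarith)
  have hasSum_homogeneous : HasSum (fun n => p n fun _ => (x, y)) (g (x, y)) := by
    simpa using hp.hasSum mem_ball
  have summable_monomials : Summable fun q : ℕ × ℕ =>
      (x ^ q.1 * y ^ q.2) • monomialCoeff p (q.1 + q.2) q.1 := by
    refine .of_norm_bounded summable_coeff fun q => ?_
    rw [norm_smul, norm_mul, norm_pow, norm_pow, mul_comm, pow_add]
    gcongr
  convert summable_monomials.hasSum
  refine hasSum_homogeneous.unique ?_
  simp only [apply_eq_sum_antidiagonal]
  exact (Finset.HasAntidiagonal.sigmaAntidiagonalEquivProd.hasSum_iff.2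
    summable_monomials.hasSum).sigma fun n => hasSum_sigma_antidiagonal _ n

end DoubleSeries

section PowerSeries

open FormalMultilinearSeries

variable {𝕜 E B : Type*} [NontriviallyNormedField 𝕜] [NormedAddCommGroup E] [NormedSpace 𝕜 E]
  [NormedRing B] [NormedAlgebra 𝕜 B] [CompleteSpace B] [NormOneClass B] {b : ℕ → 𝕜} {r : ℝ}

lemma analyticAt_zero_of_hasSum {f : 𝕜 → E} {G : ℕ → E}
    (h : ∀ᶠ z in 𝓝 0, HasSum (fun n => z ^ n • G n) (f z)) : AnalyticAt 𝕜 f 0 :=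
  ⟨fun n => ContinuousMultilinearMap.mkPiRing 𝕜 (Fin n) (G n),
    hasFPowerSeriesAt_iff.2 (by simpa [FormalMultilinearSeries.coeff] using h)⟩

lemma hasSum_ofScalarsSum (hb : Summable fun j => ‖b j‖ * r ^ j) {z : B} (hz : ‖z‖ ≤ r) :
    HasSum (fun j => b j • z ^ j) (ofScalarsSum b z) := by
  rw [ofScalarsSum_eq_tsum]
  refine (Summable.of_norm_bounded hb fun j => ?_).hasSum
  rw [norm_smul]
  gcongr
  exact (norm_pow_le z j).trans (by gcongr)

lemma eventually_isUnit_ofScalarsSum (hr : 0 < r) (hb : Summable fun j => ‖b j‖ * r ^ j)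
    (hb0 : b 0 ≠ 0) : ∀ᶠ z in 𝓝 (0 : B), IsUnit (ofScalarsSum b z) := by
  lift r to NNReal using hr.le
  have radius_pos : 0 < (ofScalars B b).radius :=
    (ENNReal.coe_pos.2 hr).trans_le (le_radius_of_summable_norm _ (by simpa using hb))
  have continuousAt_sum : ContinuousAt (ofScalarsSum b) (0 : B) :=
    ((ofScalars B b).hasFPowerSeriesOnBall radius_pos).analyticAt.continuousAt
  refine continuousAt_sum.eventually (Units.isOpen.mem_nhds ?_)
  rw [ofScalarsSum_zero, ← Algebra.algebraMap_eq_smul_one]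
  exact (IsUnit.mk0 _ hb0).map (algebraMap 𝕜 B)

lemma summable_norm_mul_pow_nat_add (hr : 0 < r)
    (hb : Summable fun j => ‖b j‖ * r ^ j) (k : ℕ) : Summable fun j => ‖b (j + k)‖ * r ^ j := by
  simpa [pow_add, ← mul_assoc, summable_mul_right_iff (pow_pos hr k).ne'] using
    (summable_nat_add_iff k).2 hb

lemma ofScalarsSum_eq_pow_mul (hr : 0 < r) (hb : Summable fun j => ‖b j‖ * r ^ j)
    {k : ℕ} (hk : ∀ j < k, b j = 0) {S : B} (hS : ‖S‖ ≤ r) :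
    ofScalarsSum b S = S ^ k * ofScalarsSum (fun j => b (j + k)) S := by
  have sum_head : ∑ j ∈ Finset.range k, b j • S ^ j = 0 :=
    Finset.sum_eq_zero fun j hj => by rw [hk j (Finset.mem_range.1 hj), zero_smul]
  have sum_all := (hasSum_nat_add_iff' (f := fun j => b j • S ^ j) k).2
    (hasSum_ofScalarsSum hb hS)
  rw [sum_head, sub_zero] at sum_all
  refine sum_all.unique ?_
  have sum_tail :=
    (hasSum_ofScalarsSum (summable_norm_mul_pow_nat_add hr hb k) hS).mul_left (S ^ k)
  simpa only [mul_smul_comm, ← pow_add, add_comm k] using sum_tail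

lemma exists_isUnit_ofScalarsSum_smul (hr : 0 < r) (hb : Summable fun j => ‖b j‖ * r ^ j)
    (hb0 : b 0 ≠ 0) (z : B) :
    ∃ σ : 𝕜, σ ≠ 0 ∧ ‖σ • z‖ ≤ r ∧ IsUnit (ofScalarsSum b (σ • z)) := by
  have tendsto_scale : Tendsto (fun σ : 𝕜 => σ • z) (𝓝[≠] 0) (𝓝 0) :=
    ((continuous_id.smul continuous_const).tendsto' 0 0 (zero_smul 𝕜 _)).mono_left
      nhdsWithin_le_nhds
  have small : ∀ᶠ S in 𝓝 (0 : B), ‖S‖ ≤ r :=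
    (continuous_norm.tendsto' 0 0 norm_zero).eventually_le_const hr
  obtain ⟨σ, ⟨hσr, hσ⟩, hσ0⟩ := ((tendsto_scale.eventually
    (small.and (eventually_isUnit_ofScalarsSum hr hb hb0))).and self_mem_nhdsWithin).exists
  exact ⟨σ, hσ0, hσr, hσ⟩

lemma analyticAt_clm_apply {F G : Type*} [NormedAddCommGroup F] [NormedSpace 𝕜 F]
    [NormedAddCommGroup G] [NormedSpace 𝕜 G] {T : G → E →L[𝕜] F} {q : G → E} {z : G}
    (hT : AnalyticAt 𝕜 T z) (hq : AnalyticAt 𝕜 q z) : AnalyticAt 𝕜 (fun z => T z (q z)) z :=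
  AnalyticAt.fun_comp (f := fun z => (T z, q z))
    ((ContinuousLinearMap.id 𝕜 (E →L[𝕜] F)).analyticAt_bilinear (T z, q z)) (hT.prod hq)

end PowerSeries

section BoundedSequences

open scoped BoundedContinuousFunction
open BoundedContinuousFunction (evalCLM)

variable {𝕜 : Type*} [NontriviallyNormedField 𝕜]

variable (𝕜) in
/-- Multiplication by the variable on power series with bounded coefficients, which are encoded by
their coefficient sequences. -/
noncomputable def shift : (ℕ →ᵇ 𝕜) →L[𝕜] ℕ →ᵇ 𝕜 :=
  LinearMap.mkContinuous
    { toFun := fun h => .ofNormedAddCommGroupDiscrete (fun n => n.casesOn 0 h) ‖h‖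
        (by rintro (_ | n); exacts [by simp, h.norm_coe_le_norm n])
      map_add' := fun _ _ => by ext (_ | n) <;> simp
      map_smul' := fun _ _ => by ext (_ | n) <;> simp } 1 fun h => by
    refine (BoundedContinuousFunction.norm_le (by positivity)).2 ?_
    rintro (_ | n)
    exacts [by simp, by simpa using h.norm_coe_le_norm n]

variable (𝕜) in
/-- Deletion of the constant coefficient, the left inverse of `shift`. -/
noncomputable def unshift : (ℕ →ᵇ 𝕜) →L[𝕜] ℕ →ᵇ 𝕜 :=
  BoundedContinuousFunction.compContinuousCLM 𝕜 𝕜 ⟨Nat.succ, continuous_of_discreteTopology⟩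

variable (𝕜) in
/-- The constant power series `1`. -/
noncomputable def constOne : ℕ →ᵇ 𝕜 :=
  .ofNormedAddCommGroupDiscrete (Pi.single 0 1) 1 fun n => by
    rcases eq_or_ne n 0 with rfl | hn <;> simp [*]

lemma constOne_apply (n : ℕ) : constOne 𝕜 n = if n = 0 then 1 else 0 := Pi.single_apply 0 1 n

instance : Nontrivial (ℕ →ᵇ 𝕜) :=
  ⟨constOne 𝕜, 0, fun h => by simpa [constOne_apply] using DFunLike.congr_fun h 0⟩

@[simp] lemma shift_apply_zero (h : ℕ →ᵇ 𝕜) : shift 𝕜 h 0 = 0 := rfl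

@[simp] lemma shift_apply_succ (h : ℕ →ᵇ 𝕜) (n : ℕ) : shift 𝕜 h (n + 1) = h n := rfl

@[simp] lemma unshift_apply (h : ℕ →ᵇ 𝕜) (n : ℕ) : unshift 𝕜 h n = h (n + 1) := rfl

lemma shift_pow_apply_of_lt (h : ℕ →ᵇ 𝕜) {k n : ℕ} (hn : n < k) : (shift 𝕜 ^ k) h n = 0 := by
  induction k generalizing n with
  | zero => omega
  | succ k ih =>
    rw [pow_succ', mul_apply_eq_comp]
    cases n with
    | zero => rfl
    | succ n => exact ih (by omega)

lemma unshift_pow_apply (h : ℕ →ᵇ 𝕜) (k n : ℕ) : (unshift 𝕜 ^ k) h n = h (n + k) := by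
  induction k generalizing n with
  | zero => rfl
  | succ k ih => rw [pow_succ', mul_apply_eq_comp, unshift_apply, ih, add_right_comm,
      add_assoc]

/-- Evaluation at `z` of power series with bounded coefficients; meaningful for `‖z‖ < 1`. -/
noncomputable def evalSeries (z : 𝕜) : (ℕ →ᵇ 𝕜) →L[𝕜] 𝕜 := ∑' n, z ^ n • evalCLM 𝕜 n

lemma norm_evalCLM_le_one (n : ℕ) : ‖(evalCLM 𝕜 n : (ℕ →ᵇ 𝕜) →L[𝕜] 𝕜)‖ ≤ 1 :=
  ContinuousLinearMap.opNorm_le_bound _ zero_le_one fun h => by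
    simpa using h.norm_coe_le_norm n

variable [CompleteSpace 𝕜] {z : 𝕜}

lemma hasSum_evalSeries (hz : ‖z‖ < 1) :
    HasSum (fun n => z ^ n • (evalCLM 𝕜 n : (ℕ →ᵇ 𝕜) →L[𝕜] 𝕜)) (evalSeries z) := by
  refine (Summable.of_norm_bounded (summable_geometric_of_lt_one (norm_nonneg z) hz)
    fun n => ?_).hasSum
  rw [norm_smul, norm_pow]
  exact mul_le_of_le_one_right (by positivity) (norm_evalCLM_le_one n)

lemma hasSum_evalSeries_apply (hz : ‖z‖ < 1) (h : ℕ →ᵇ 𝕜) :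
    HasSum (fun n => z ^ n * h n) (evalSeries z h) :=
  (hasSum_evalSeries hz).mapL (ContinuousLinearMap.apply 𝕜 𝕜 h)

lemma analyticAt_evalSeries : AnalyticAt 𝕜 (evalSeries : 𝕜 → (ℕ →ᵇ 𝕜) →L[𝕜] 𝕜) 0 :=
  analyticAt_zero_of_hasSum <| ((continuous_norm.tendsto' 0 0 norm_zero).eventually_lt_const
    one_pos).mono fun _ => hasSum_evalSeries

lemma evalSeries_shift (hz : ‖z‖ < 1) (h : ℕ →ᵇ 𝕜) :
    evalSeries z (shift 𝕜 h) = z * evalSeries z h := by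
  refine (hasSum_evalSeries_apply hz _).unique ?_
  rw [← hasSum_nat_add_iff' 1]
  simpa [pow_succ', mul_assoc] using (hasSum_evalSeries_apply hz h).mul_left z

lemma evalSeries_eq_sum_add (hz : ‖z‖ < 1) (h : ℕ →ᵇ 𝕜) (k : ℕ) :
    evalSeries z h =
      ∑ n ∈ Finset.range k, z ^ n * h n + z ^ k * evalSeries z ((unshift 𝕜 ^ k) h) := by
  rw [← sub_eq_iff_eq_add']
  refine ((hasSum_nat_add_iff' k).2 (hasSum_evalSeries_apply hz h)).unique ?_
  simpa only [unshift_pow_apply, pow_add, mul_assoc, mul_left_comm] using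
    (hasSum_evalSeries_apply hz ((unshift 𝕜 ^ k) h)).mul_left (z ^ k)

lemma evalSeries_constOne (hz : ‖z‖ < 1) : evalSeries z (constOne 𝕜) = 1 := by
  refine (hasSum_evalSeries_apply hz _).unique ?_
  convert hasSum_single (f := fun n => z ^ n * constOne 𝕜 n) 0 ?_ <;>
    simp +contextual [constOne_apply]

end BoundedSequences

section OperatorSeries

open FormalMultilinearSeries (ofScalarsSum)

variable {𝕜 E B : Type*} [NontriviallyNormedField 𝕜]
  [NormedAddCommGroup E] [NormedSpace 𝕜 E]
  [NormedRing B] [NormedAlgebra 𝕜 B] [CompleteSpace B] [NormOneClass B]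
  {a : ℕ → ℕ → 𝕜} {r : ℝ} {x : 𝕜}

/-- The sum at `(x, S)` of the double power series with coefficients `a i j`, whose first variable
is a scalar and whose second variable is an element of a Banach algebra. -/
noncomputable def operatorSeries (a : ℕ → ℕ → 𝕜) (S : B) (x : 𝕜) : B :=
  ∑' q : ℕ × ℕ, (x ^ q.1 * a q.1 q.2) • S ^ q.2

lemma hasSum_operatorSeries (ha : Summable fun q : ℕ × ℕ => ‖a q.1 q.2‖ * r ^ (q.1 + q.2))
    (hx : ‖x‖ ≤ r) {S : B} (hS : ‖S‖ ≤ r) :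
    HasSum (fun q : ℕ × ℕ => (x ^ q.1 * a q.1 q.2) • S ^ q.2) (operatorSeries a S x) := by
  have hr : 0 ≤ r := (norm_nonneg x).trans hx
  refine (Summable.of_norm_bounded ha fun q => ?_).hasSum
  rw [norm_smul, norm_mul, norm_pow, mul_comm (‖x‖ ^ _), mul_assoc, pow_add]
  gcongr
  exact (norm_pow_le S _).trans (by gcongr)

lemma summable_norm_row (hr : 0 < r)
    (ha : Summable fun q : ℕ × ℕ => ‖a q.1 q.2‖ * r ^ (q.1 + q.2)) (i : ℕ) :
    Summable fun j => ‖a i j‖ * r ^ j := by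
  simpa [pow_add, mul_left_comm _ (r ^ i), summable_mul_left_iff (pow_pos hr i).ne']
    using ha.prod_factor i

lemma hasSum_operatorSeries_rows (hr : 0 < r)
    (ha : Summable fun q : ℕ × ℕ => ‖a q.1 q.2‖ * r ^ (q.1 + q.2))
    (hx : ‖x‖ ≤ r) {S : B} (hS : ‖S‖ ≤ r) :
    HasSum (fun i => x ^ i • ofScalarsSum (a i) S) (operatorSeries a S x) :=
  (hasSum_operatorSeries ha hx hS).prod_fiberwise fun i => by
    simpa only [mul_smul] using
      (hasSum_ofScalarsSum (summable_norm_row hr ha i) hS).const_smul (x ^ i)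

lemma analyticAt_operatorSeries (hr : 0 < r)
    (ha : Summable fun q : ℕ × ℕ => ‖a q.1 q.2‖ * r ^ (q.1 + q.2)) {S : B} (hS : ‖S‖ ≤ r) :
    AnalyticAt 𝕜 (operatorSeries a S) 0 :=
  analyticAt_zero_of_hasSum <| ((continuous_norm.tendsto' 0 0 norm_zero).eventually_le_const
    hr).mono fun _ hx => hasSum_operatorSeries_rows hr ha hx hS

lemma operatorSeries_zero (hr : 0 < r)
    (ha : Summable fun q : ℕ × ℕ => ‖a q.1 q.2‖ * r ^ (q.1 + q.2)) {S : B} (hS : ‖S‖ ≤ r) :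
    operatorSeries a S 0 = ofScalarsSum (a 0) S := by
  refine (hasSum_operatorSeries_rows hr ha (by simpa using hr.le) hS).unique ?_
  convert hasSum_single (f := fun i => (0 : 𝕜) ^ i • ofScalarsSum (a i) S) 0 ?_
  · simp
  · intro i hi
    simp [hi]

lemma apply_pow_of_intertwines {φ : E →L[𝕜] 𝕜} {S : E →L[𝕜] E} {y : 𝕜}
    (hφ : ∀ h, φ (S h) = y * φ h) (j : ℕ) (h : E) : φ ((S ^ j) h) = y ^ j * φ h := by
  induction j with
  | zero => simp
  | succ j ih => rw [pow_succ', mul_apply_eq_comp, hφ, ih, pow_succ', mul_assoc]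

lemma smul_clm_pow_apply (c : 𝕜) (T : E →L[𝕜] E) (k : ℕ) (h : E) :
    ((c • T) ^ k) h = c ^ k • (T ^ k) h := by
  rw [_root_.smul_pow, smul_apply]

variable [CompleteSpace E]

lemma exists_analyticAt_apply_eq {T : 𝕜 → E →L[𝕜] E} {x₀ : 𝕜} (hT : AnalyticAt 𝕜 T x₀)
    (hT₀ : IsUnit (T x₀)) (e : E) :
    ∃ q : 𝕜 → E, AnalyticAt 𝕜 q x₀ ∧ ∀ᶠ x in 𝓝 x₀, T x (q x) = e := by
  obtain ⟨t, ht⟩ := hT₀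
  refine ⟨fun x => Ring.inverse (T x) e, ?_, ?_⟩
  · have analyticAt_inverse_T : AnalyticAt 𝕜 (fun x => Ring.inverse (T x)) x₀ :=
      AnalyticAt.fun_comp (by rw [← ht]; exact analyticAt_inverse t) hT
    exact analyticAt_clm_apply analyticAt_inverse_T analyticAt_const
  · filter_upwards [hT.continuousAt.eventually (Units.isOpen.mem_nhds ⟨t, ht⟩)] with x hx
    rw [← mul_apply_eq_comp, Ring.mul_inverse_cancel _ hx, one_apply_eq_self]

variable [Nontrivial E]

lemma apply_operatorSeries (ha : Summable fun q : ℕ × ℕ => ‖a q.1 q.2‖ * r ^ (q.1 + q.2))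
    {φ : E →L[𝕜] 𝕜} {S : E →L[𝕜] E} {y : 𝕜} (hφ : ∀ h, φ (S h) = y * φ h) (hS : ‖S‖ ≤ r)
    (hx : ‖x‖ ≤ r) {s : 𝕜} (hs : HasSum (fun q : ℕ × ℕ => (x ^ q.1 * y ^ q.2) • a q.1 q.2) s)
    (h : E) : φ (operatorSeries a S x h) = s * φ h := by
  have term_eq (q : ℕ × ℕ) : φ (((x ^ q.1 * a q.1 q.2) • S ^ q.2) h) =
      (x ^ q.1 * y ^ q.2) • a q.1 q.2 * φ h := by
    rw [smul_apply, map_smul, apply_pow_of_intertwines hφ, smul_eq_mul, smul_eq_mul]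
    ring
  have hasSum_apply := (hasSum_operatorSeries ha hx hS).mapL
    (φ.comp (ContinuousLinearMap.apply 𝕜 E h))
  simp only [ContinuousLinearMap.comp_apply, ContinuousLinearMap.apply_apply, term_eq]
    at hasSum_apply
  exact hasSum_apply.unique (hs.mul_right (φ h))

lemma apply_ofScalarsSum_of_annihilates {b : ℕ → 𝕜} (hb : Summable fun j => ‖b j‖ * r ^ j)
    {φ : E →L[𝕜] 𝕜} {S : E →L[𝕜] E} (hφ : ∀ h, φ (S h) = 0) (hS : ‖S‖ ≤ r) (h : E) :
    φ (ofScalarsSum b S h) = b 0 * φ h := by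
  have hasSum_apply := (hasSum_ofScalarsSum hb hS).mapL
    (φ.comp (ContinuousLinearMap.apply 𝕜 E h))
  refine (hasSum_apply.unique (hasSum_single 0 fun j hj => ?_)).trans (by simp)
  obtain ⟨j, rfl⟩ := Nat.exists_eq_succ_of_ne_zero hj
  rw [ContinuousLinearMap.comp_apply, ContinuousLinearMap.apply_apply, smul_apply, map_smul,
    pow_succ', mul_apply_eq_comp, hφ, smul_zero]

/-- Weierstrass division in operator form: `S` stands for multiplication by the second variable and
`L` for division by it, discarding the remainder. Multiplication by `q x` turns the series with
coefficients `a` into one whose quotient by the `k`-th power of the second variable is `e`. -/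
lemma exists_cofactor (hr : 0 < r)
    (ha : Summable fun q : ℕ × ℕ => ‖a q.1 q.2‖ * r ^ (q.1 + q.2)) {k : ℕ}
    (hk : ∀ j < k, a 0 j = 0) {L S : E →L[𝕜] E} (hLS : L * S = 1) (hS : ‖S‖ ≤ r)
    (hunit : IsUnit (ofScalarsSum (fun j => a 0 (j + k)) S)) (e : E) :
    ∃ q : 𝕜 → E, AnalyticAt 𝕜 q 0 ∧ ofScalarsSum (fun j => a 0 (j + k)) S (q 0) = e ∧
      ∀ᶠ x in 𝓝 0, (L ^ k) (operatorSeries a S x (q x)) = e := by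
  have quotient_zero :
      L ^ k * operatorSeries a S 0 = ofScalarsSum (fun j => a 0 (j + k)) S := by
    rw [operatorSeries_zero hr ha hS,
      ofScalarsSum_eq_pow_mul hr (summable_norm_row hr ha 0) hk hS, ← mul_assoc,
      pow_mul_pow_eq_one k hLS, one_mul]
  obtain ⟨q, hq, hq_eq⟩ := exists_analyticAt_apply_eq (T := fun x => L ^ k * operatorSeries a S x)
    (analyticAt_const.mul (analyticAt_operatorSeries hr ha hS)) (quotient_zero ▸ hunit) e
  exact ⟨q, hq, by simpa only [quotient_zero] using hq_eq.self_of_nhds, hq_eq⟩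

end OperatorSeries

section Slice

variable {α R : Type*} [CommRing R]

/-- A polynomial `W` whose coefficients are functions on `α`, seen as the family of polynomials
`slice x W` obtained by evaluating the coefficients at `x`. -/
noncomputable def slice (x : α) : (α → R)[X] →+* R[X] := mapRingHom (Pi.evalRingHom (fun _ => R) x)

@[simp] lemma coeff_slice (x : α) (W : (α → R)[X]) (n : ℕ) :
    (slice x W).coeff n = W.coeff n x := coeff_map _ n

@[simp] lemma slice_X (x : α) : slice x (X : (α → R)[X]) = X := map_X _

lemma monic_slice {W : (α → R)[X]} (hW : W.Monic) (x : α) : (slice x W).Monic := hW.map _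

lemma natDegree_slice [Nontrivial R] {W : (α → R)[X]} (hW : W.Monic) (x : α) :
    (slice x W).natDegree = W.natDegree := hW.natDegree_map _

end Slice

section WeierstrassPreparation

open FormalMultilinearSeries (ofScalarsSum)
open scoped BoundedContinuousFunction

variable {𝕜 : Type*} [NontriviallyNormedField 𝕜] {a : ℕ → ℕ → 𝕜} {r : ℝ}

lemma exists_first_coeff_ne_zero (hr : 0 < r) {g : 𝕜 × 𝕜 → 𝕜}
    (hg : ∀ x y, ‖x‖ < r → ‖y‖ < r →
      HasSum (fun q : ℕ × ℕ => (x ^ q.1 * y ^ q.2) • a q.1 q.2) (g (x, y)))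
    (hg₀ : ¬ ∀ᶠ y in 𝓝 0, g (0, y) = 0) : ∃ k, (∀ j < k, a 0 j = 0) ∧ a 0 k ≠ 0 := by
  classical
  suffices exists_coeff_ne : ∃ k, a 0 k ≠ 0 from ⟨Nat.find exists_coeff_ne,
    fun j hj => not_not.1 (Nat.find_min exists_coeff_ne hj), Nat.find_spec exists_coeff_ne⟩
  by_contra! coeff_eq_zero
  refine hg₀ ?_
  filter_upwards [(continuous_norm.tendsto' (0 : 𝕜) 0 norm_zero).eventually_lt_const hr] with y hy
  have term_zero (q : ℕ × ℕ) : ((0 : 𝕜) ^ q.1 * y ^ q.2) • a q.1 q.2 = 0 := by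
    rcases q with ⟨_ | i, j⟩ <;> simp [coeff_eq_zero]
  exact (hg 0 y (by simpa using hr) hy).unique (by simpa only [term_zero] using hasSum_zero)

variable [CompleteSpace 𝕜]

lemma evalSeries_smul_shift {σ y : 𝕜} (hσ : σ ≠ 0) (hy : ‖y / σ‖ < 1) (h : ℕ →ᵇ 𝕜) :
    evalSeries (y / σ) ((σ • shift 𝕜) h) = y * evalSeries (y / σ) h := by
  rw [smul_apply, map_smul, evalSeries_shift hy, smul_eq_mul, ← mul_assoc, mul_div_cancel₀ y hσ]

/-- Weierstrass division in terms of coefficient sequences in the scaled variable `y / σ`. -/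
lemma exists_cofactor_sequence (hr : 0 < r)
    (ha : Summable fun q : ℕ × ℕ => ‖a q.1 q.2‖ * r ^ (q.1 + q.2)) {k : ℕ}
    (hk : ∀ j < k, a 0 j = 0) (hk' : a 0 k ≠ 0) {g : 𝕜 × 𝕜 → 𝕜}
    (hg : ∀ x y, ‖x‖ < r → ‖y‖ < r →
      HasSum (fun q : ℕ × ℕ => (x ^ q.1 * y ^ q.2) • a q.1 q.2) (g (x, y))) :
    ∃ (σ : 𝕜) (q w : 𝕜 → ℕ →ᵇ 𝕜), σ ≠ 0 ∧ AnalyticAt 𝕜 q 0 ∧ AnalyticAt 𝕜 w 0 ∧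
      evalSeries 0 (q 0) ≠ 0 ∧ (∀ n < k, w 0 n = 0) ∧
      (∀ᶠ x in 𝓝 0, (unshift 𝕜 ^ k) (w x) = σ ^ k • constOne 𝕜) ∧
      ∀ x y, ‖x‖ < r → ‖y‖ < r → ‖y / σ‖ < 1 →
        g (x, y) * evalSeries (y / σ) (q x) = evalSeries (y / σ) (w x) := by
  have summable_row := summable_norm_row hr ha 0
  have summable_tail := summable_norm_mul_pow_nat_add hr summable_row k
  obtain ⟨σ, hσ, hσr, hunit⟩ := exists_isUnit_ofScalarsSum_smul hr summable_tail
    (by simpa using hk') (shift 𝕜)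
  have hLS : (σ⁻¹ • unshift 𝕜) * (σ • shift 𝕜) = 1 := by
    ext h n
    simp [hσ]
  obtain ⟨q, hq, hq₀, hq_eq⟩ := exists_cofactor hr ha hk hLS hσr hunit (constOne 𝕜)
  have w_zero : operatorSeries a (σ • shift 𝕜) 0 (q 0) = σ ^ k • (shift 𝕜 ^ k) (constOne 𝕜) := by
    rw [operatorSeries_zero hr ha hσr, ofScalarsSum_eq_pow_mul hr summable_row hk hσr,
      mul_apply_eq_comp, hq₀, smul_clm_pow_apply]
  have eval_q_zero : a 0 k * evalSeries 0 (q 0) = 1 := by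
    rw [← evalSeries_constOne (𝕜 := 𝕜) (z := 0) (by simp), ← hq₀,
      apply_ofScalarsSum_of_annihilates summable_tail
        (fun h => by simp [evalSeries_shift (z := (0 : 𝕜)) (by simp)]) hσr, zero_add]
  refine ⟨σ, q, fun x => operatorSeries a (σ • shift 𝕜) x (q x), hσ, hq,
    analyticAt_clm_apply (analyticAt_operatorSeries hr ha hσr) hq,
    right_ne_zero_of_mul_eq_one eval_q_zero, fun n hn => ?_, ?_, fun x y hx hy hyσ => ?_⟩
  · simp only [w_zero, BoundedContinuousFunction.coe_smul, shift_pow_apply_of_lt _ hn, smul_zero]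
  · filter_upwards [hq_eq] with x hx
    rw [← hx, smul_clm_pow_apply, inv_pow, smul_inv_smul₀ (pow_ne_zero k hσ)]
  · exact (apply_operatorSeries ha (evalSeries_smul_shift hσ hyσ) hσr hx.le (hg x y hx hy) _).symm

theorem weierstrass_preparation_of_hasSum (hr : 0 < r)
    (ha : Summable fun q : ℕ × ℕ => ‖a q.1 q.2‖ * r ^ (q.1 + q.2)) {k : ℕ}
    (hk : ∀ j < k, a 0 j = 0) (hk' : a 0 k ≠ 0) {g : 𝕜 × 𝕜 → 𝕜}
    (hg : ∀ x y, ‖x‖ < r → ‖y‖ < r →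
      HasSum (fun q : ℕ × ℕ => (x ^ q.1 * y ^ q.2) • a q.1 q.2) (g (x, y))) :
    ∃ (c : ℕ → 𝕜 → 𝕜) (u : 𝕜 × 𝕜 → 𝕜), (∀ n, AnalyticAt 𝕜 (c n) 0) ∧ (∀ n < k, c n 0 = 0) ∧
      AnalyticAt 𝕜 u 0 ∧ u 0 ≠ 0 ∧
      ∀ᶠ z in 𝓝 (0 : 𝕜 × 𝕜), g z * u z = z.2 ^ k + ∑ n ∈ Finset.range k, c n z.1 * z.2 ^ n := by
  obtain ⟨σ, q, w, hσ, hq, hw, q_zero_ne, w_zero, quotient_w, mul_eval⟩ :=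
    exists_cofactor_sequence hr ha hk hk' hg
  refine ⟨fun n x => w x n / σ ^ n, fun z => evalSeries (z.2 / σ) (q z.1), fun n => ?_,
    fun n hn => by simp only [w_zero n hn, zero_div], ?_, by simpa using q_zero_ne, ?_⟩
  · exact (((BoundedContinuousFunction.evalCLM 𝕜 n).analyticAt _).comp hw).div_const
  · have analyticAt_eval : AnalyticAt 𝕜 (fun z : 𝕜 × 𝕜 => evalSeries (z.2 / σ)) 0 :=
      AnalyticAt.fun_comp (by simpa using analyticAt_evalSeries) analyticAt_snd.div_const
    exact analyticAt_clm_apply analyticAt_eval (AnalyticAt.fun_comp hq analyticAt_fst)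
  · have hx : Tendsto Prod.fst (𝓝 (0 : 𝕜 × 𝕜)) (𝓝 0) := continuous_fst.tendsto 0
    have hy : Tendsto Prod.snd (𝓝 (0 : 𝕜 × 𝕜)) (𝓝 0) := continuous_snd.tendsto 0
    have hyσ : Tendsto (fun z : 𝕜 × 𝕜 => ‖z.2 / σ‖) (𝓝 0) (𝓝 0) := by
      simpa using (hy.div_const σ).norm
    filter_upwards [hx.eventually quotient_w, hx.norm.eventually_lt_const (by simpa using hr),
      hy.norm.eventually_lt_const (by simpa using hr), hyσ.eventually_lt_const one_pos]
      with ⟨x, y⟩ hw hxr hyr hyσ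
    calc g (x, y) * evalSeries (y / σ) (q x)
        = evalSeries (y / σ) (w x) := mul_eval x y hxr hyr hyσ
      _ = y ^ k + ∑ n ∈ Finset.range k, (y / σ) ^ n * w x n := by
          rw [evalSeries_eq_sum_add hyσ _ k, hw, map_smul, evalSeries_constOne hyσ,
            add_comm, smul_eq_mul, mul_one, div_pow, div_mul_cancel₀ _ (pow_ne_zero k hσ)]
      _ = y ^ k + ∑ n ∈ Finset.range k, w x n / σ ^ n * y ^ n := by
          simp only [div_pow, div_mul_comm]

theorem weierstrass_preparation {g : 𝕜 × 𝕜 → 𝕜} (hg : AnalyticAt 𝕜 g 0)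
    (hg₀ : ¬ ∀ᶠ y in 𝓝 0, g (0, y) = 0) :
    ∃ W : (𝕜 → 𝕜)[X], W.Monic ∧ (∀ n, AnalyticAt 𝕜 (W.coeff n) 0) ∧
      slice 0 W = X ^ W.natDegree ∧
      ∃ u : 𝕜 × 𝕜 → 𝕜, AnalyticAt 𝕜 u 0 ∧ u 0 ≠ 0 ∧
        ∀ᶠ z in 𝓝 (0 : 𝕜 × 𝕜), g z * u z = (slice z.1 W).eval z.2 := by
  classical
  obtain ⟨a, r, hr, ha, hga⟩ := exists_hasSum_double_series hg
  obtain ⟨k, hk, hk'⟩ := exists_first_coeff_ne_zero hr hga hg₀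
  obtain ⟨c, u, hc, c_zero, hu, hu₀, hcu⟩ := weierstrass_preparation_of_hasSum hr ha hk hk' hga
  have coeff_ofFn n : AnalyticAt 𝕜 ((ofFn k fun n => c n).coeff n) 0 := by
    rcases lt_or_ge n k with hn | hn
    · simpa only [ofFn_coeff_eq_val_of_lt _ hn] using hc n
    · rw [ofFn_coeff_eq_zero_of_ge _ hn]
      exact analyticAt_const (v := (0 : 𝕜))
  have slice_W x : slice x (X ^ k + ofFn k fun n => c n) =
      X ^ k + ∑ n ∈ Finset.range k, monomial n (c n x) := by
    rw [map_add, map_pow, slice_X, ofFn_eq_sum_monomial, map_sum,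
      Finset.sum_range fun n => monomial n (c n x)]
    simp [slice]
  refine ⟨X ^ k + ofFn k fun n => c n, monic_X_pow_add (ofFn_degree_lt _), fun n => ?_, ?_, u, hu,
    hu₀, ?_⟩
  · rw [coeff_add, coeff_X_pow]
    refine AnalyticAt.add ?_ (coeff_ofFn n)
    split_ifs <;> exact analyticAt_const
  · rw [slice_W, natDegree_add_eq_left_of_degree_lt (by simpa using ofFn_degree_lt _),
      natDegree_X_pow, Finset.sum_eq_zero, add_zero]
    exact fun n hn => by rw [c_zero n (Finset.mem_range.1 hn), monomial_zero_right]
  · filter_upwards [hcu] with z hz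
    rw [hz, slice_W]
    simp [eval_finsetSum]

end WeierstrassPreparation

section MeromorphicGerms

variable {𝕜 : Type*} [NontriviallyNormedField 𝕜] (x₀ : 𝕜)

/-- The ring of functions meromorphic at `x₀`. -/
def meromorphicSubring : Subring (𝕜 → 𝕜) where
  carrier := {f | MeromorphicAt f x₀}
  mul_mem' := MeromorphicAt.mul
  one_mem' := MeromorphicAt.const 1 x₀
  add_mem' := MeromorphicAt.add
  zero_mem' := MeromorphicAt.const 0 x₀
  neg_mem' := MeromorphicAt.neg

/-- The germs at `x₀`, on punctured neighborhoods, of functions meromorphic at `x₀`. -/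
abbrev MeromorphicGerm : Subring (Germ (𝓝[≠] x₀) 𝕜) :=
  ((Germ.coeRingHom (𝓝[≠] x₀)).comp (meromorphicSubring x₀).subtype).range

/-- The germ of a function meromorphic at `x₀`. -/
def meromorphicGerm : meromorphicSubring x₀ →+* MeromorphicGerm x₀ :=
  ((Germ.coeRingHom (𝓝[≠] x₀)).comp (meromorphicSubring x₀).subtype).rangeRestrict

variable {x₀}

lemma meromorphicGerm_surjective : Function.Surjective (meromorphicGerm x₀) :=
  RingHom.rangeRestrict_surjective _

lemma meromorphicGerm_eq_iff {f g : meromorphicSubring x₀} :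
    meromorphicGerm x₀ f = meromorphicGerm x₀ g ↔ (f : 𝕜 → 𝕜) =ᶠ[𝓝[≠] x₀] g :=
  Subtype.ext_iff.trans Germ.coe_eq

lemma isField_meromorphicGerm : IsField (MeromorphicGerm x₀) where
  exists_pair_ne := ⟨0, 1, zero_ne_one⟩
  mul_comm := mul_comm
  mul_inv_cancel {a} ha := by
    obtain ⟨f, rfl⟩ := meromorphicGerm_surjective a
    refine ⟨meromorphicGerm x₀ ⟨_, f.2.inv⟩, ?_⟩
    rw [← map_mul, ← map_one (meromorphicGerm x₀), meromorphicGerm_eq_iff]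
    rcases f.2.eventually_eq_zero_or_eventually_ne_zero with h | h
    · exact absurd (((meromorphicGerm_eq_iff (g := 0)).2 h).trans (map_zero _)) ha
    · filter_upwards [h] with x hx
      exact mul_inv_cancel₀ hx

noncomputable instance : Field (MeromorphicGerm x₀) := isField_meromorphicGerm.toField

instance [CharZero 𝕜] : CharZero (MeromorphicGerm x₀) :=
  charZero_of_injective_ringHom ((meromorphicGerm x₀).comp
    ((Pi.constRingHom 𝕜 𝕜).codRestrict _ fun c => MeromorphicAt.const c x₀)).injective

/-- The value at `x` of a polynomial whose coefficients are functions meromorphic at `x₀`. -/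
noncomputable def meromorphicSlice (x : 𝕜) : (meromorphicSubring x₀)[X] →+* 𝕜[X] :=
  (slice x).comp (mapRingHom (meromorphicSubring x₀).subtype)

variable {p q : (meromorphicSubring x₀)[X]}

lemma eventually_meromorphicSlice_eq (h : p.map (meromorphicGerm x₀) = q.map (meromorphicGerm x₀)) :
    ∀ᶠ x in 𝓝[≠] x₀, meromorphicSlice x p = meromorphicSlice x q := by
  have coeff_eq (n : ℕ) : (p.coeff n : 𝕜 → 𝕜) =ᶠ[𝓝[≠] x₀] q.coeff n := by
    rw [← meromorphicGerm_eq_iff, ← coeff_map, h, coeff_map]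
  have eventually_coeff_eq : ∀ᶠ x in 𝓝[≠] x₀, ∀ n ∈ Finset.range (max p.natDegree q.natDegree + 1),
      (p.coeff n : 𝕜 → 𝕜) x = (q.coeff n : 𝕜 → 𝕜) x :=
    (eventually_all_finset _).2 fun n _ => coeff_eq n
  filter_upwards [eventually_coeff_eq] with x hx
  ext n
  rcases lt_or_ge n (max p.natDegree q.natDegree + 1) with hn | hn
  · simpa [meromorphicSlice] using hx n (Finset.mem_range.2 hn)
  · simp [meromorphicSlice, coeff_eq_zero_of_natDegree_lt (show p.natDegree < n by grind),
      coeff_eq_zero_of_natDegree_lt (show q.natDegree < n by grind)]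

lemma eventually_meromorphicSlice_dvd
    (h : p.map (meromorphicGerm x₀) ∣ q.map (meromorphicGerm x₀)) :
    ∀ᶠ x in 𝓝[≠] x₀, meromorphicSlice x p ∣ meromorphicSlice x q := by
  obtain ⟨s, hs⟩ := h
  obtain ⟨s, rfl⟩ := map_surjective _ meromorphicGerm_surjective s
  rw [← Polynomial.map_mul] at hs
  filter_upwards [eventually_meromorphicSlice_eq hs] with x hx
  exact ⟨_, hx.trans (map_mul _ _ _)⟩

lemma eventually_separable_meromorphicSlice (h : (p.map (meromorphicGerm x₀)).Separable) :
    ∀ᶠ x in 𝓝[≠] x₀, (meromorphicSlice x p).Separable := by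
  obtain ⟨a, b, hab⟩ := h
  obtain ⟨a, rfl⟩ := map_surjective _ meromorphicGerm_surjective a
  obtain ⟨b, rfl⟩ := map_surjective _ meromorphicGerm_surjective b
  rw [derivative_map, ← Polynomial.map_mul, ← Polynomial.map_mul, ← Polynomial.map_add,
    ← Polynomial.map_one (meromorphicGerm x₀)] at hab
  filter_upwards [eventually_meromorphicSlice_eq hab] with x hx
  refine ⟨meromorphicSlice x a, meromorphicSlice x b, ?_⟩
  rw [← map_one (meromorphicSlice x), ← hx]
  simp [meromorphicSlice, slice, derivative_map]

end MeromorphicGerms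

section SeparablePart

lemma exists_monic_separable_dvd_dvd_pow {K : Type*} [Field K] [PerfectField K] {w : K[X]}
    (hw : w ≠ 0) : ∃ p : K[X], p.Monic ∧ p.Separable ∧ p ∣ w ∧ ∃ N, w ∣ p ^ N := by
  classical
  set ρ := UniqueFactorizationMonoid.radical w
  have hρ : ρ ≠ 0 := UniqueFactorizationMonoid.radical_ne_zero
  have associated_monic : Associated ρ (ρ * C ρ.leadingCoeff⁻¹) :=
    associated_mul_unit_right _ _ (isUnit_C.2 (by simpa using hρ))
  obtain ⟨N, hN⟩ := UniqueFactorizationMonoid.exists_dvd_radical_self_pow hw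
  refine ⟨ρ * C ρ.leadingCoeff⁻¹, monic_mul_leadingCoeff_inv hρ, ?_,
    associated_monic.symm.dvd.trans UniqueFactorizationMonoid.radical_dvd_self,
    N, hN.trans (pow_dvd_pow_of_dvd associated_monic.dvd N)⟩
  rw [PerfectField.separable_iff_squarefree]
  exact associated_monic.squarefree_iff.1 UniqueFactorizationMonoid.squarefree_radical

theorem exists_monic_separable_isRoot_iff {𝕜 : Type*} [NontriviallyNormedField 𝕜] [CharZero 𝕜]
    {x₀ : 𝕜} {W : (𝕜 → 𝕜)[X]} (hW : W.Monic) (hWx₀ : ∀ n, MeromorphicAt (W.coeff n) x₀) :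
    ∃ P : (𝕜 → 𝕜)[X], P.Monic ∧ (∀ n, MeromorphicAt (P.coeff n) x₀) ∧
      ∀ᶠ x in 𝓝[≠] x₀, (slice x P).Separable ∧
        ∀ y, (slice x P).IsRoot y ↔ (slice x W).IsRoot y := by
  have W_mem : W ∈ lifts (meromorphicSubring x₀).subtype :=
    (lifts_iff_coeff_lifts W).2 fun n => ⟨⟨_, hWx₀ n⟩, rfl⟩
  obtain ⟨w, rfl, -, hw⟩ := lifts_and_natDegree_eq_and_monic W_mem hW
  obtain ⟨p, hp, p_separable, p_dvd, N, dvd_pow⟩ :=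
    exists_monic_separable_dvd_dvd_pow (hw.map (meromorphicGerm x₀)).ne_zero
  have p_mem : p ∈ lifts (meromorphicGerm x₀) :=
    (lifts_iff_coeff_lifts p).2 fun n => meromorphicGerm_surjective _
  obtain ⟨p, rfl, -, hp⟩ := lifts_and_natDegree_eq_and_monic p_mem hp
  rw [← Polynomial.map_pow] at dvd_pow
  refine ⟨p.map (meromorphicSubring x₀).subtype, hp.map _,
    fun n => by rw [coeff_map]; exact (p.coeff n).2, ?_⟩
  filter_upwards [eventually_separable_meromorphicSlice p_separable,
    eventually_meromorphicSlice_dvd p_dvd, eventually_meromorphicSlice_dvd dvd_pow]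
    with x separable dvd dvd_pow
  rw [map_pow] at dvd_pow
  refine ⟨separable, fun y => ⟨fun hy => hy.dvd dvd, fun hy => ?_⟩⟩
  exact eq_zero_of_pow_eq_zero (n := N) ((eval_pow N).symm.trans (hy.dvd dvd_pow))

end SeparablePart

section RootFamilies

lemma eval_slice {α R : Type*} [CommRing R] (P : (α → R)[X]) (x : α) (t : R) :
    (slice x P).eval t = ∑ n ∈ Finset.range (P.natDegree + 1), P.coeff n x * t ^ n := by
  have natDegree_lt : (slice x P).natDegree < P.natDegree + 1 := Nat.lt_succ_of_le natDegree_map_le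
  simp only [eval_eq_sum_range' natDegree_lt, coeff_slice]

lemma continuousAt_eval_slice {α R : Type*} [TopologicalSpace α] [CommRing R] [TopologicalSpace R]
    [IsTopologicalRing R] {P : (α → R)[X]} {x₀ : α} (hP : ∀ n, ContinuousAt (P.coeff n) x₀)
    (t₀ : R) : ContinuousAt (fun z : α × R => (slice z.1 P).eval z.2) (x₀, t₀) := by
  simp only [eval_slice]
  exact tendsto_finsetSum _ fun n _ =>
    (ContinuousAt.comp (f := Prod.fst) (x := (x₀, t₀)) (hP n) continuousAt_fst).mul
      (continuousAt_snd.pow n)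

lemma analyticAt_eval_slice {𝕜 : Type*} [NontriviallyNormedField 𝕜] {P : (𝕜 → 𝕜)[X]} {x₀ : 𝕜}
    (hP : ∀ n, AnalyticAt 𝕜 (P.coeff n) x₀) (t₀ : 𝕜) :
    AnalyticAt 𝕜 (fun z : 𝕜 × 𝕜 => (slice z.1 P).eval z.2) (x₀, t₀) := by
  simp only [eval_slice]
  exact Finset.analyticAt_fun_sum _ fun n _ =>
    (AnalyticAt.fun_comp (f := Prod.fst) (x := (x₀, t₀)) (hP n) analyticAt_fst).mul
      (analyticAt_snd.pow n)

lemma eventually_forall_isRoot_norm_le {α 𝕜 : Type*} [TopologicalSpace α] [NormedField 𝕜]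
    {P : (α → 𝕜)[X]} {x₀ : α} (hP : P.Monic) (hPx₀ : ∀ n, ContinuousAt (P.coeff n) x₀) :
    ∃ B : ℝ, ∀ᶠ x in 𝓝 x₀, ∀ t, (slice x P).IsRoot t → ‖t‖ ≤ B := by
  have continuousAt_cauchyBound : ContinuousAt (fun x => (slice x P).cauchyBound) x₀ := by
    simp only [cauchyBound, natDegree_slice hP, (monic_slice hP _).leadingCoeff, nnnorm_one,
      div_one, coeff_slice]
    exact (Filter.Tendsto.finset_sup_nhds_apply fun n _ => (hPx₀ n).nnnorm).add_const 1
  refine ⟨(slice x₀ P).cauchyBound + 1, ?_⟩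
  filter_upwards [continuousAt_cauchyBound.eventually_le_const (lt_add_one _)] with x hx t ht
  exact_mod_cast (ht.norm_lt_cauchyBound (monic_slice hP x).ne_zero).le.trans hx

lemma eventually_forall_isRoot_mem {α 𝕜 : Type*} [TopologicalSpace α] [NormedField 𝕜]
    [ProperSpace 𝕜] {P : (α → 𝕜)[X]} {x₀ : α} (hP : P.Monic)
    (hPx₀ : ∀ n, ContinuousAt (P.coeff n) x₀) {U : Set 𝕜} (hU : IsOpen U)
    (roots_mem : ∀ t, (slice x₀ P).IsRoot t → t ∈ U) :
    ∀ᶠ x in 𝓝 x₀, ∀ t, (slice x P).IsRoot t → t ∈ U := by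
  obtain ⟨B, hB⟩ := eventually_forall_isRoot_norm_le hP hPx₀
  have eventually_ne : ∀ᶠ x in 𝓝 x₀, ∀ t ∈ Metric.closedBall 0 B \ U, (slice x P).eval t ≠ 0 :=
    ((isCompact_closedBall 0 B).diff hU).eventually_forall_of_forall_eventually fun t ht =>
      (continuousAt_eval_slice hPx₀ t).eventually_ne fun h => ht.2 (roots_mem t h)
  filter_upwards [hB, eventually_ne] with x hxB hx t ht
  by_contra htU
  exact hx t ⟨by simpa using hxB t ht, htU⟩ ht

lemma exists_root_function {𝕜 : Type*} [NontriviallyNormedField 𝕜] [CompleteSpace 𝕜]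
    {P : (𝕜 → 𝕜)[X]} {x₀ s : 𝕜} (hP : ∀ n, AnalyticAt 𝕜 (P.coeff n) x₀)
    (hs : (slice x₀ P).IsRoot s) (hs' : (derivative (slice x₀ P)).eval s ≠ 0) :
    ∃ φ : 𝕜 → 𝕜, Tendsto φ (𝓝 x₀) (𝓝 s) ∧
      ∀ᶠ z in 𝓝 (x₀, s), (slice z.1 P).IsRoot z.2 ↔ φ z.1 = z.2 := by
  have hasStrictFDerivAt := (analyticAt_eval_slice hP s).hasStrictFDerivAt
  set F' := fderiv 𝕜 (fun z : 𝕜 × 𝕜 => (slice z.1 P).eval z.2) (x₀, s)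
  have partial_eq : (F' ∘L .inr 𝕜 𝕜 𝕜) 1 = (derivative (slice x₀ P)).eval s :=
    (hasStrictFDerivAt.hasFDerivAt.comp s (hasFDerivAt_prodMk_right x₀ s)).hasDerivAt.unique
      ((slice x₀ P).hasDerivAt s)
  have partial_invertible : (F' ∘L .inr 𝕜 𝕜 𝕜).IsInvertible :=
    ⟨.unitsEquivAut 𝕜 (.mk0 _ hs'), by ext; simp [← partial_eq]⟩
  refine ⟨_, hasStrictFDerivAt.tendsto_implicitFunctionOfProdDomain partial_invertible, ?_⟩
  filter_upwards [hasStrictFDerivAt.eventually_apply_eq_iff_implicitFunctionOfProdDomain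
    partial_invertible] with z hz
  rw [← hz, IsRoot, show (slice x₀ P).eval s = 0 from hs]

lemma eventually_analyticAt_coeff {𝕜 : Type*} [NontriviallyNormedField 𝕜] [CompleteSpace 𝕜]
    {P : (𝕜 → 𝕜)[X]} {x₀ : 𝕜} (hP : ∀ n, MeromorphicAt (P.coeff n) x₀) :
    ∀ᶠ x in 𝓝[≠] x₀, ∀ n, AnalyticAt 𝕜 (P.coeff n) x := by
  have eventually_of_le : ∀ᶠ x in 𝓝[≠] x₀, ∀ n ≤ P.natDegree, AnalyticAt 𝕜 (P.coeff n) x :=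
    (finite_Iic _).eventually_all.2 fun n _ => (hP n).eventually_analyticAt
  filter_upwards [eventually_of_le] with x hx n
  obtain hn | hn := le_or_gt n P.natDegree
  · exact hx n hn
  · rw [coeff_eq_zero_of_natDegree_lt hn]
    exact analyticAt_const

end RootFamilies

section MovingFinsets

variable {α Y : Type*} [TopologicalSpace α] [TopologicalSpace Y] {S : α → Finset Y} {x₀ : α}

/-- The finite set `S x` moves continuously at `x₀`: near `x₀` its points are the values of
functions of `x`, one for each `s ∈ S x₀`, which tend to `s` at `x₀`. -/
def MovesContinuouslyAt (S : α → Finset Y) (x₀ : α) : Prop :=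
  ∃ φ : Y → α → Y, (∀ s ∈ S x₀, Tendsto (φ s) (𝓝 x₀) (𝓝 s)) ∧
    ∀ᶠ x in 𝓝 x₀, ∀ y, y ∈ S x ↔ ∃ s ∈ S x₀, φ s x = y

theorem movesContinuouslyAt_roots {𝕜 : Type*} [NontriviallyNormedField 𝕜] [ProperSpace 𝕜]
    [DecidableEq 𝕜] {P : (𝕜 → 𝕜)[X]} {x₀ : 𝕜} (hP : P.Monic)
    (hPx₀ : ∀ n, AnalyticAt 𝕜 (P.coeff n) x₀) (separable : (slice x₀ P).Separable) :
    MovesContinuouslyAt (fun x => (slice x P).roots.toFinset) x₀ := by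
  have mem_roots (x t : 𝕜) : t ∈ (slice x P).roots.toFinset ↔ (slice x P).IsRoot t := by
    simp [(monic_slice hP x).ne_zero]
  have exists_φ : ∀ s ∈ (slice x₀ P).roots.toFinset, ∃ φ : 𝕜 → 𝕜, Tendsto φ (𝓝 x₀) (𝓝 s) ∧
      ∀ᶠ z in 𝓝 (x₀, s), (slice z.1 P).IsRoot z.2 ↔ φ z.1 = z.2 := fun s hs => by
    have hs := (mem_roots x₀ s).1 hs
    have hs' := separable.eval₂_derivative_ne_zero (.id 𝕜) (by simpa using hs)
    exact exists_root_function hPx₀ hs (by simpa using hs')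
  choose! φ tendsto_φ isRoot_iff using exists_φ
  have φ_isRoot : ∀ᶠ x in 𝓝 x₀, ∀ s ∈ (slice x₀ P).roots.toFinset, (slice x P).IsRoot (φ s x) :=
    (eventually_all_finset _).2 fun s hs =>
      ((tendsto_id.prodMk_nhds (tendsto_φ s hs)).eventually (isRoot_iff s hs)).mono
        fun x hx => hx.2 rfl
  obtain ⟨B, norm_le⟩ := eventually_forall_isRoot_norm_le hP fun n => (hPx₀ n).continuousAt
  have eq_φ : ∀ᶠ x in 𝓝 x₀, ∀ t ∈ Metric.closedBall 0 B,
      (slice x P).IsRoot t → ∃ s ∈ (slice x₀ P).roots.toFinset, φ s x = t := by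
    refine (isCompact_closedBall 0 B).eventually_forall_of_forall_eventually fun t _ => ?_
    by_cases ht : t ∈ (slice x₀ P).roots.toFinset
    · filter_upwards [isRoot_iff t ht] with z hz hzP
      exact ⟨t, ht, hz.1 hzP⟩
    · have continuousAt_eval := continuousAt_eval_slice (fun n => (hPx₀ n).continuousAt) t
      have eventually_ne := continuousAt_eval.eventually_ne fun h => ht ((mem_roots x₀ t).2 h)
      exact eventually_ne.mono fun z hz hzP => absurd hzP hz
  refine ⟨φ, tendsto_φ, ?_⟩
  filter_upwards [φ_isRoot, norm_le, eq_φ] with x hxφ hxB hx t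
  rw [mem_roots]
  refine ⟨fun ht => hx t (by simpa using hxB t ht) ht, ?_⟩
  rintro ⟨s, hs, rfl⟩
  exact hxφ s hs

end MovingFinsets

section SortedEnumeration

variable {α Y : Type*} [TopologicalSpace α] [TopologicalSpace Y] [LinearOrder Y]
  [OrderClosedTopology Y] {S : α → Finset Y}

lemma eventually_strictMono {ι : Type*} [Finite ι] [Preorder ι] {ψ : ι → α → Y} {x₀ : α}
    (continuousAt_ψ : ∀ i, ContinuousAt (ψ i) x₀) (strictMono_ψ : StrictMono (ψ · x₀)) :
    ∀ᶠ x in 𝓝 x₀, StrictMono (ψ · x) := by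
  simp only [StrictMono, eventually_all]
  exact fun i j hij => (continuousAt_ψ i).eventually_lt (continuousAt_ψ j) (strictMono_ψ hij)

lemma MovesContinuouslyAt.exists_strictMono {x₀ : α} (hS : MovesContinuouslyAt S x₀) :
    ∃ ψ : Fin (S x₀).card → α → Y, (∀ i, ContinuousAt (ψ i) x₀) ∧
      ∀ᶠ x in 𝓝 x₀, StrictMono (ψ · x) ∧ range (ψ · x) = S x := by
  obtain ⟨φ, tendsto_φ, mem_iff⟩ := hS
  set e := (S x₀).orderEmbOfFin rfl
  have tendsto_φe (i) : Tendsto (φ (e i)) (𝓝 x₀) (𝓝 (e i)) :=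
    tendsto_φ _ (Finset.orderEmbOfFin_mem _ rfl i)
  have continuousAt_φe (i) : ContinuousAt (φ (e i)) x₀ :=
    continuousAt_of_tendsto_nhds (tendsto_φe i)
  have strictMono_φe : StrictMono fun i => φ (e i) x₀ := by
    simpa only [fun i => eq_of_tendsto_nhds (tendsto_φe i)] using e.strictMono
  refine ⟨fun i => φ (e i), continuousAt_φe, ?_⟩
  filter_upwards [eventually_strictMono continuousAt_φe strictMono_φe, mem_iff] with x hx hxS
  have coe_S : (S x : Set Y) = (φ · x) '' S x₀ := Set.ext hxS
  exact ⟨hx, by rw [coe_S, ← Finset.range_orderEmbOfFin _ rfl, ← range_comp, Function.comp_def]⟩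

lemma MovesContinuouslyAt.continuousAt_card {x₀ : α} (hS : MovesContinuouslyAt S x₀) :
    ContinuousAt (fun x => (S x).card) x₀ := by
  obtain ⟨ψ, -, hψ⟩ := hS.exists_strictMono
  refine (tendsto_pure.2 (hψ.mono fun x hx => ?_)).mono_right (pure_le_nhds _)
  rw [← ncard_coe_finset, ← hx.2, ncard_range_of_injective hx.1.injective, Nat.card_fin]

theorem exists_continuousOn_enumeration {I : Set α} (hI : IsConnected I)
    (hS : ∀ x ∈ I, MovesContinuouslyAt S x) :
    ∃ (n : ℕ) (y : Fin n → α → Y), (∀ i, ContinuousOn (y i) I) ∧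
      ∀ x ∈ I, StrictMono (y · x) ∧ range (y · x) = S x := by
  obtain ⟨x₀, hx₀⟩ := hI.nonempty
  set n := (S x₀).card
  have card_eq : ∀ x ∈ I, (S x).card = n := fun x hx =>
    hI.isPreconnected.constant (fun x hx => (hS x hx).continuousAt_card.continuousWithinAt) hx hx₀
  have nonempty : Nonempty (Fin n → Y) := ⟨(S x₀).orderEmbOfFin rfl⟩
  have exists_y : ∀ x ∈ I, ∃ y : Fin n → Y, StrictMono y ∧ range y = S x := fun x hx =>
    ⟨_, ((S x).orderEmbOfFin (card_eq x hx)).strictMono, Finset.range_orderEmbOfFin _ _⟩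
  choose! y hy using exists_y
  refine ⟨n, fun i x => y x i, fun i x hx => ?_, hy⟩
  obtain ⟨ψ, continuousAt_ψ, hψ⟩ := card_eq x hx ▸ (hS x hx).exists_strictMono
  have eventually_eq : (fun x => y x i) =ᶠ[𝓝[I] x] ψ i := by
    filter_upwards [nhdsWithin_le_nhds hψ, self_mem_nhdsWithin] with x' hx' hx'I
    have y_eq_ψ : y x' = (ψ · x') :=
      ((hy x' hx'I).1.range_inj hx'.1).1 ((hy x' hx'I).2.trans hx'.2.symm)
    exact congrFun y_eq_ψ i
  exact (continuousAt_ψ i).continuousWithinAt.congr_of_eventuallyEq_of_mem eventually_eq hx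

end SortedEnumeration

section ArcFans

variable {ι κ X Y : Type*} [TopologicalSpace X] [TopologicalSpace Y]

open scoped Function in
/-- A fan of arcs in `Z` with vertex `p`: arcs `γ i` with parameter in `[0, 1]`, injective, issuing
from `p`, pairwise disjoint apart from `p`, whose union agrees with `Z` on a punctured neighbourhood
of `p`. Whether `p` itself belongs to `Z` is left open, so that one-sided fans can be glued. -/
structure IsArcFan (γ : ι → ℝ → X) (Z : Set X) (p : X) : Prop where
  continuousOn : ∀ i, ContinuousOn (γ i) (Icc 0 1)
  injOn : ∀ i, InjOn (γ i) (Icc 0 1)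
  apply_zero : ∀ i, γ i 0 = p
  disjoint : Pairwise (Disjoint on fun i => γ i '' Ioc 0 1)
  eventually_mem_iff : ∀ᶠ q in 𝓝[≠] p, q ∈ Z ↔ ∃ i, q ∈ γ i '' Ioc 0 1

namespace IsArcFan

variable {γ : ι → ℝ → X} {Z : Set X} {p : X}

lemma congr (hγ : IsArcFan γ Z p) {Z' : Set X} (hZ : ∀ᶠ q in 𝓝[≠] p, q ∈ Z' ↔ q ∈ Z) :
    IsArcFan γ Z' p where
  __ := hγ
  eventually_mem_iff := by
    filter_upwards [hγ.eventually_mem_iff, hZ] with q hq hqZ using hqZ.trans hq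

lemma reindex (hγ : IsArcFan γ Z p) (e : κ ≃ ι) : IsArcFan (fun k => γ (e k)) Z p where
  continuousOn k := hγ.continuousOn (e k)
  injOn k := hγ.injOn (e k)
  apply_zero k := hγ.apply_zero (e k)
  disjoint := hγ.disjoint.comp_of_injective e.injective
  eventually_mem_iff := by simpa only [e.exists_congr_left, e.apply_symm_apply] using
    hγ.eventually_mem_iff

lemma map_homeomorph (hγ : IsArcFan γ Z p) (e : X ≃ₜ Y) :
    IsArcFan (fun i t => e (γ i t)) (e.symm ⁻¹' Z) (e p) where
  continuousOn i := e.continuous.comp_continuousOn (hγ.continuousOn i)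
  injOn i := e.injective.comp_injOn (hγ.injOn i)
  apply_zero i := congrArg e (hγ.apply_zero i)
  disjoint i j hij := by
    simpa only [Function.onFun, image_image] using
      (disjoint_image_iff e.injective).2 (hγ.disjoint hij)
  eventually_mem_iff := by
    rw [← e.map_punctured_nhds_eq, eventually_map]
    filter_upwards [hγ.eventually_mem_iff] with q hq
    simpa only [mem_preimage, e.symm_apply_apply, mem_image, e.injective.eq_iff] using hq

lemma sumElim (hγ : IsArcFan γ Z p) {δ : κ → ℝ → X} {Z' : Set X} (hδ : IsArcFan δ Z' p)
    (hγδ : ∀ i j, Disjoint (γ i '' Ioc 0 1) (δ j '' Ioc 0 1)) :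
    IsArcFan (Sum.elim γ δ) (Z ∪ Z') p where
  continuousOn := Sum.forall.2 ⟨hγ.continuousOn, hδ.continuousOn⟩
  injOn := Sum.forall.2 ⟨hγ.injOn, hδ.injOn⟩
  apply_zero := Sum.forall.2 ⟨hγ.apply_zero, hδ.apply_zero⟩
  disjoint
    | .inl _, .inl _, hij => hγ.disjoint (ne_of_apply_ne _ hij)
    | .inl i, .inr j, _ => hγδ i j
    | .inr j, .inl i, _ => (hγδ i j).symm
    | .inr _, .inr _, hij => hδ.disjoint (ne_of_apply_ne _ hij)
  eventually_mem_iff := by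
    filter_upwards [hγ.eventually_mem_iff, hδ.eventually_mem_iff] with q hqZ hqZ'
    simp only [mem_union, hqZ, hqZ', Sum.exists, Sum.elim_inl, Sum.elim_inr]

lemma notMem_image_Ioc (hγ : IsArcFan γ Z p) (i : ι) : p ∉ γ i '' Ioc 0 1 := by
  rintro ⟨t, ht, hp⟩
  exact ht.1.ne' <| hγ.injOn i (Ioc_subset_Icc_self ht) (left_mem_Icc.2 zero_le_one) <|
    hp.trans (hγ.apply_zero i).symm

lemma exists_ball_inter_eq {X : Type*} [PseudoMetricSpace X] {γ : ι → ℝ → X} {Z : Set X} {p : X}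
    (hγ : IsArcFan γ Z p) (hp : p ∈ Z) :
    ∃ ε > 0, {q ∈ Metric.ball p ε | q ∈ Z} = ({p} ∪ ⋃ i, γ i '' Icc 0 1) ∩ Metric.ball p ε := by
  obtain ⟨ε, hε, hball⟩ := Metric.eventually_nhds_iff_ball.1
    (eventually_nhdsWithin_iff.1 hγ.eventually_mem_iff)
  refine ⟨ε, hε, ?_⟩
  ext q
  simp only [mem_ofPred_eq, mem_inter_iff, and_comm (b := q ∈ Metric.ball p ε), mem_union,
    mem_singleton_iff, mem_iUnion, and_congr_right_iff]
  intro hq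
  obtain rfl | hqp := eq_or_ne q p
  · simp only [hp, true_or]
  · simp only [hball q hq hqp, ← Ioc_insert_left zero_le_one, image_insert_eq, mem_insert_iff,
      hγ.apply_zero, hqp, false_or]

end IsArcFan

lemma eventually_fst_div_le_one (c : ℝ) (y₀ : Y) : ∀ᶠ z : ℝ × Y in 𝓝 (0, y₀), z.1 / c ≤ 1 := by
  have continuousAt_div : ContinuousAt (fun z : ℝ × Y => z.1 / c) (0, y₀) := by fun_prop
  exact continuousAt_div.tendsto.eventually_le_const (by simp)

lemma isArcFan_graph {c : ℝ} (hc : c ≠ 0) {h : ι → ℝ → Y} {y₀ : Y}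
    (continuousOn_h : ∀ i, ContinuousOn (h i) (Icc 0 1)) (h_zero : ∀ i, h i 0 = y₀)
    (injective_h : ∀ t ∈ Ioc (0 : ℝ) 1, Function.Injective (h · t)) :
    IsArcFan (fun i t => (c * t, h i t)) {z | 0 < z.1 / c ∧ ∃ i, h i (z.1 / c) = z.2} (0, y₀) where
  continuousOn i := (continuousOn_const.mul continuousOn_id).prodMk (continuousOn_h i)
  injOn i s _ t _ hst := mul_left_cancel₀ hc (congrArg Prod.fst hst)
  apply_zero i := by simp [h_zero]
  disjoint i j hij := by
    refine disjoint_left.2 ?_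
    rintro _ ⟨s, hs, rfl⟩ ⟨t, ht, hst⟩
    obtain ⟨hcst, hh⟩ := Prod.mk.inj hst
    obtain rfl := mul_left_cancel₀ hc hcst
    exact hij (injective_h t ht hh.symm)
  eventually_mem_iff := by
    filter_upwards [nhdsWithin_le_nhds (eventually_fst_div_le_one c y₀)] with z hz
    constructor
    · rintro ⟨hz₀, i, hi⟩
      exact ⟨i, z.1 / c, ⟨hz₀, hz⟩, Prod.ext (mul_div_cancel₀ _ hc) hi⟩
    · rintro ⟨i, t, ht, rfl⟩
      simp only [mul_div_cancel_left₀ _ hc]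
      exact ⟨ht.1, i, rfl⟩

end ArcFans

section Branches

theorem card_roots_modEq_natDegree {p : ℝ[X]} (hp : p ≠ 0) :
    p.roots.card ≡ p.natDegree [MOD 2] := by
  induction p using WfDvdMonoid.induction_on_irreducible with
  | zero => exact absurd rfl hp
  | unit u hu =>
    obtain ⟨c, -, rfl⟩ := isUnit_iff.1 hu
    simp [Nat.ModEq]
  | mul q i hq hi ih =>
    rw [roots_mul hp, Multiset.card_add, natDegree_mul hi.ne_zero hq]
    refine Nat.ModEq.add ?_ (ih hq)
    obtain hdeg | hdeg : i.natDegree = 1 ∨ i.natDegree = 2 := by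
      have := hi.natDegree_pos
      have := hi.natDegree_le_two
      lia
    · rw [hdeg, roots_degree_eq_one ((degree_eq_iff_natDegree_eq_of_pos one_pos).2 hdeg),
        Multiset.card_singleton]
    · have roots_eq_zero : i.roots = 0 := Multiset.eq_zero_of_forall_notMem fun x hx => by
        have natDegree_eq_one : i.natDegree = 1 := natDegree_eq_of_degree_eq_some
          (degree_eq_one_of_irreducible_of_root hi (isRoot_of_mem_roots hx))
        lia
      simp [roots_eq_zero, hdeg, Nat.ModEq]

variable {P : (ℝ → ℝ)[X]}

theorem exists_root_branches (hP : P.Monic) {I : Set ℝ} (hI : IsConnected I)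
    (analyticAt : ∀ x ∈ I, ∀ n, AnalyticAt ℝ (P.coeff n) x)
    (separable : ∀ x ∈ I, (slice x P).Separable) :
    ∃ (n : ℕ) (y : Fin n → ℝ → ℝ), n ≡ P.natDegree [MOD 2] ∧ (∀ i, ContinuousOn (y i) I) ∧
      ∀ x ∈ I, Function.Injective (y · x) ∧ ∀ t, (slice x P).IsRoot t ↔ ∃ i, y i x = t := by
  obtain ⟨n, y, continuousOn_y, hy⟩ := exists_continuousOn_enumeration hI fun x hx =>
    movesContinuouslyAt_roots hP (analyticAt x hx) (separable x hx)
  refine ⟨n, y, ?_, continuousOn_y, fun x hx => ⟨(hy x hx).1.injective, fun t => ?_⟩⟩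
  · obtain ⟨x, hx⟩ := hI.nonempty
    have card_eq : (slice x P).roots.card = n := by
      rw [← Multiset.toFinset_card_of_nodup (nodup_roots (separable x hx)), ← ncard_coe_finset,
        ← (hy x hx).2, ncard_range_of_injective (hy x hx).1.injective, Nat.card_fin]
    rw [← card_eq, ← natDegree_slice hP x]
    exact card_roots_modEq_natDegree (monic_slice hP x).ne_zero
  · rw [← mem_range, (hy x hx).2, Finset.mem_coe, Multiset.mem_toFinset,
      mem_roots (monic_slice hP x).ne_zero]

theorem exists_isArcFan_halfPlane (hP : P.Monic) {c : ℝ} (hc : c ≠ 0)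
    (analyticAt : ∀ t ∈ Ioc (0 : ℝ) 1, ∀ n, AnalyticAt ℝ (P.coeff n) (c * t))
    (separable : ∀ t ∈ Ioc (0 : ℝ) 1, (slice (c * t) P).Separable)
    (roots_small : ∀ U ∈ 𝓝 (0 : ℝ), ∀ᶠ x in 𝓝[≠] (0 : ℝ), ∀ t, (slice x P).IsRoot t → t ∈ U) :
    ∃ (n : ℕ) (h : Fin n → ℝ → ℝ), n ≡ P.natDegree [MOD 2] ∧
      IsArcFan (fun i t => (c * t, h i t)) {z | 0 < z.1 / c ∧ (slice z.1 P).IsRoot z.2} 0 := by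
  have isConnected : IsConnected ((c * ·) '' Ioc (0 : ℝ) 1) :=
    (isConnected_Ioc zero_lt_one).image _ (by fun_prop)
  obtain ⟨n, y, hn, continuousOn_y, hy⟩ := exists_root_branches hP isConnected
    (forall_mem_image.2 analyticAt) (forall_mem_image.2 separable)
  rw [forall_mem_image] at hy
  have tendsto_y (i : Fin n) : Tendsto (fun t => y i (c * t)) (𝓝[Ioc 0 1] 0) (𝓝 0) := by
    have tendsto_mul : Tendsto (c * ·) (𝓝[Ioc 0 1] 0) (𝓝[≠] 0) := by
      simpa only [mul_zero] using (continuous_const_mul c).continuousWithinAt.tendsto_nhdsWithin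
        (x := 0) (t := {c * 0}ᶜ) fun t (ht : t ∈ Ioc 0 1) => by simpa [hc] using ht.1.ne'
    refine fun U hU => mem_map.2 ?_
    filter_upwards [tendsto_mul.eventually (roots_small U hU), self_mem_nhdsWithin] with t htU ht
    exact htU _ (((hy ht).2 _).2 ⟨i, rfl⟩)
  let h (i : Fin n) := Function.update (fun t => y i (c * t)) 0 0
  have h_eq {t : ℝ} (ht : 0 < t) (i : Fin n) : h i t = y i (c * t) :=
    Function.update_of_ne ht.ne' ..
  have continuousOn_h (i : Fin n) : ContinuousOn (h i) (Icc 0 1) := by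
    rw [continuousOn_update_iff, Icc_sdiff_left]
    exact ⟨(continuousOn_y i).comp (by fun_prop) (mapsTo_image _ _), fun _ => tendsto_y i⟩
  have isArcFan_h := isArcFan_graph hc continuousOn_h (fun i => Function.update_self ..)
    fun t ht => by simpa only [h_eq ht.1] using (hy ht).1
  refine ⟨n, h, hn, isArcFan_h.congr ?_⟩
  filter_upwards [nhdsWithin_le_nhds (eventually_fst_div_le_one c 0)] with z hz
  refine and_congr_right fun hz₀ => ?_
  simpa only [h_eq hz₀, mul_div_cancel₀ _ hc] using (hy ⟨hz₀, hz⟩).2 z.2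

end Branches

section NodalSets

theorem exists_isArcFan_puncturedStrip {P : (ℝ → ℝ)[X]} (hP : P.Monic)
    (meromorphicAt : ∀ n, MeromorphicAt (P.coeff n) 0)
    (separable : ∀ᶠ x in 𝓝[≠] 0, (slice x P).Separable)
    (roots_small : ∀ U ∈ 𝓝 (0 : ℝ), ∀ᶠ x in 𝓝[≠] 0, ∀ t, (slice x P).IsRoot t → t ∈ U) :
    ∃ (r : ℕ) (γ : Fin (2 * r) → ℝ → ℝ × ℝ),
      IsArcFan γ {z | z.1 ≠ 0 ∧ (slice z.1 P).IsRoot z.2} 0 := by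
  obtain ⟨δ, hδ, hPδ⟩ := (nhdsWithin_hasBasis Metric.nhds_basis_closedBall _).eventually_iff.1
    ((eventually_analyticAt_coeff meromorphicAt).and separable)
  have exists_fan {c : ℝ} (hc : |c| = δ) :=
    have hc₀ : c ≠ 0 := abs_pos.1 (hc ▸ hδ)
    have hPc (t : ℝ) (ht : t ∈ Ioc (0 : ℝ) 1) := hPδ (x := c * t)
      ⟨by simpa [abs_mul, hc, abs_of_pos ht.1, hδ] using ht.2, mul_ne_zero hc₀ ht.1.ne'⟩
    exists_isArcFan_halfPlane hP hc₀ (fun t ht => (hPc t ht).1) (fun t ht => (hPc t ht).2)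
      roots_small
  obtain ⟨m, h, hm, fan_right⟩ := exists_fan (abs_of_pos hδ)
  obtain ⟨n, k, hn, fan_left⟩ := exists_fan ((abs_neg δ).trans (abs_of_pos hδ))
  obtain ⟨r, hr⟩ : Even (m + n) := by
    rw [Nat.even_add, Nat.even_iff, Nat.even_iff, hm.trans hn.symm]
  have fan := fan_right.sumElim fan_left fun i j => disjoint_left.2 <| by
    rintro _ ⟨s, hs, rfl⟩ ⟨t, ht, hst⟩
    have fst_eq : -δ * t = δ * s := congrArg Prod.fst hst
    linarith [mul_pos hδ hs.1, mul_pos hδ ht.1]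
  let e : Fin (2 * r) ≃ Fin m ⊕ Fin n := (finCongr (by lia)).trans finSumFinEquiv.symm
  refine ⟨r, _, (fan.reindex e).congr <| .of_forall fun z => ?_⟩
  have ne_zero_iff : z.1 ≠ 0 ↔ 0 < z.1 / δ ∨ 0 < z.1 / -δ := by
    rw [div_neg, neg_pos, or_comm, ← ne_iff_lt_or_gt, div_ne_zero_iff, and_iff_left hδ.ne']
  simp only [mem_ofPred_eq, mem_union, ne_zero_iff, or_and_right]

theorem exists_isArcFan_isRoot {W : (ℝ → ℝ)[X]} (hW : W.Monic)
    (analyticAt : ∀ n, AnalyticAt ℝ (W.coeff n) 0) (slice_zero : slice 0 W = X ^ W.natDegree) :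
    ∃ (r : ℕ) (γ : Fin (2 * r) → ℝ → ℝ × ℝ), IsArcFan γ {z | (slice z.1 W).IsRoot z.2} 0 := by
  have eq_zero_of_isRoot {t : ℝ} (ht : (slice 0 W).IsRoot t) : t = 0 := by
    rw [slice_zero, IsRoot, eval_pow, eval_X] at ht
    exact eq_zero_of_pow_eq_zero ht
  obtain ⟨P, hP, meromorphicAt, eventually_P⟩ :=
    exists_monic_separable_isRoot_iff hW fun n => (analyticAt n).meromorphicAt
  have roots_small (U : Set ℝ) (hU : U ∈ 𝓝 0) :
      ∀ᶠ x in 𝓝[≠] 0, ∀ t, (slice x P).IsRoot t → t ∈ U := by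
    have roots_W_small := eventually_forall_isRoot_mem hW (fun n => (analyticAt n).continuousAt)
      isOpen_interior fun t ht => eq_zero_of_isRoot ht ▸ mem_interior_iff_mem_nhds.2 hU
    filter_upwards [nhdsWithin_le_nhds roots_W_small, eventually_P] with x hxW hxP t ht
    exact interior_subset (hxW t ((hxP.2 t).1 ht))
  obtain ⟨r, γ, fan⟩ := exists_isArcFan_puncturedStrip hP meromorphicAt
    (eventually_P.mono fun _ => And.left) roots_small
  have isRoot_iff : ∀ᶠ z : ℝ × ℝ in 𝓝 0, z.1 ∈ ({0}ᶜ : Set ℝ) →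
      ((slice z.1 P).IsRoot z.2 ↔ (slice z.1 W).IsRoot z.2) :=
    (continuous_fst.tendsto (0 : ℝ × ℝ)).eventually (eventually_nhdsWithin_iff.1 eventually_P)
      |>.mono fun z hz hz₀ => (hz hz₀).2 z.2
  refine ⟨r, γ, fan.congr ?_⟩
  filter_upwards [nhdsWithin_le_nhds isRoot_iff, self_mem_nhdsWithin] with ⟨x, y⟩ hxy hxy₀
  obtain rfl | hx := eq_or_ne x 0
  · have hy : y ≠ 0 := fun hy => hxy₀ (by rw [hy]; rfl)
    simpa using fun h => hy (eq_zero_of_isRoot h)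
  · simpa [hx] using (hxy hx).symm

theorem exists_isArcFan_zeros {g : ℝ × ℝ → ℝ} (hg : AnalyticAt ℝ g 0)
    (hg₀ : ¬ ∀ᶠ y in 𝓝 0, g (0, y) = 0) :
    ∃ (r : ℕ) (γ : Fin (2 * r) → ℝ → ℝ × ℝ), IsArcFan γ {z | g z = 0} 0 := by
  obtain ⟨W, hW, analyticAt_W, slice_zero, u, hu, hu₀, hgu⟩ := weierstrass_preparation hg hg₀
  obtain ⟨r, γ, fan⟩ := exists_isArcFan_isRoot hW analyticAt_W slice_zero
  refine ⟨r, γ, fan.congr (nhdsWithin_le_nhds ?_)⟩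
  filter_upwards [hgu, hu.continuousAt.eventually_ne hu₀] with z hz huz
  simp [← hz, huz]

lemma exists_not_eventually_eq_zero_along {E F : Type*} [NormedAddCommGroup E] [NormedSpace ℝ E]
    [NormedAddCommGroup F] [NormedSpace ℝ F] [CompleteSpace F] {f : E → F} {p : E}
    (hf : AnalyticAt ℝ f p) (hnz : ∃ᶠ q in 𝓝 p, f q ≠ 0) :
    ∃ w : E, ¬ ∀ᶠ t in 𝓝 (0 : ℝ), f (p + t • w) = 0 := by
  obtain ⟨R, hR, hball⟩ := Metric.eventually_nhds_iff_ball.1 hf.eventually_analyticAt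
  obtain ⟨q, hfq, hq⟩ := (hnz.and_eventually (Metric.ball_mem_nhds p hR)).exists
  refine ⟨q - p, fun eventually_eq_zero => hfq ?_⟩
  have analyticOnNhd : AnalyticOnNhd ℝ (fun t : ℝ => f (p + t • (q - p))) (Icc 0 1) := by
    intro t ht
    have mem_ball : p + t • (q - p) ∈ Metric.ball p R :=
      (convex_ball p R).add_smul_sub_mem (Metric.mem_ball_self hR) hq ht
    exact AnalyticAt.fun_comp (g := f) (hball _ mem_ball) (by fun_prop)
  simpa using analyticOnNhd.eqOn_zero_of_preconnected_of_eventuallyEq_zero isPreconnected_Icc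
    (left_mem_Icc.2 zero_le_one) eventually_eq_zero (right_mem_Icc.2 zero_le_one)

lemma exists_continuousLinearEquiv_apply_eq {E : Type*} [NormedAddCommGroup E] [NormedSpace ℝ E]
    (hE : Module.finrank ℝ E = 2) {w : E} (hw : w ≠ 0) :
    ∃ e : (ℝ × ℝ) ≃L[ℝ] E, e (0, 1) = w := by
  have : FiniteDimensional ℝ E := .of_finrank_pos (by lia)
  have e := ContinuousLinearEquiv.ofFinrankEq (𝕜 := ℝ) (E := ℝ × ℝ) (F := E) (by simp [hE])
  obtain ⟨A, hA⟩ := SeparatingDual.exists_continuousLinearEquiv_apply_eq (R := ℝ)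
    (x := e (0, 1)) (y := w) (by simp) hw
  exact ⟨e.trans A, hA⟩

end NodalSets

end NodalSet

open NodalSet in
theorem stmt_7_general {E : Type*} [NormedAddCommGroup E] [NormedSpace ℝ E]
    (hE : Module.finrank ℝ E = 2) (f : E → ℝ) (p : E) (hf : AnalyticAt ℝ f p) (hfp : f p = 0)
    (hnz : ∀ U ∈ nhds p, ∃ q ∈ U, f q ≠ 0) :
    ∃ ε > (0 : ℝ), ∃ r : ℕ, ∃ γ : Fin (2 * r) → ℝ → E,
      (∀ i, ContinuousOn (γ i) (Set.Icc 0 1)) ∧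
      (∀ i, Set.InjOn (γ i) (Set.Icc 0 1)) ∧
      (∀ i, γ i 0 = p) ∧
      (∀ i, p ∉ γ i '' Set.Ioc 0 1) ∧
      (∀ i j, i ≠ j → (γ i '' Set.Ioc 0 1) ∩ (γ j '' Set.Ioc 0 1) = ∅) ∧
      {q ∈ Metric.ball p ε | f q = 0} =
        ({p} ∪ ⋃ i, γ i '' Set.Icc 0 1) ∩ Metric.ball p ε := by
  obtain ⟨w, hw⟩ := exists_not_eventually_eq_zero_along hf (Filter.frequently_iff.2 (hnz _))
  have hw₀ : w ≠ 0 := by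
    rintro rfl
    simp [hfp] at hw
  obtain ⟨e, he⟩ := exists_continuousLinearEquiv_apply_eq hE hw₀
  have analyticAt_comp : AnalyticAt ℝ (fun v => f (p + e v)) 0 :=
    AnalyticAt.fun_comp (g := f) (by simpa using hf) (analyticAt_const.add (e.analyticAt 0))
  have not_eventually_zero : ¬ ∀ᶠ y in nhds 0, f (p + e (0, y)) = 0 := by
    simpa [← he, ← map_smul] using hw
  obtain ⟨r, γ, fan⟩ := exists_isArcFan_zeros analyticAt_comp not_eventually_zero
  have fan_f : IsArcFan (fun i t => p + e (γ i t)) {q | f q = 0} p := by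
    simpa [Homeomorph.addLeft_symm] using
      fan.map_homeomorph (e.toHomeomorph.trans (Homeomorph.addLeft p))
  obtain ⟨ε, hε, zeros_eq⟩ := fan_f.exists_ball_inter_eq hfp
  exact ⟨ε, hε, r, _, fan_f.continuousOn, fan_f.injOn, fan_f.apply_zero, fan_f.notMem_image_Ioc,
    fun i j hij => Set.disjoint_iff_inter_eq_empty.1 (fan_f.disjoint hij), zeros_eq⟩

/-- Local structure of the nodal set of a real analytic function of two variables
(Lojasiewicz): near a non-isolated zero `p`, the zero set consists of an even number of
injective arcs emanating from `p`, pairwise disjoint away from `p`; the case `r = 0`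
corresponds to an isolated zero. -/
theorem stmt_7 (f : ℝ × ℝ → ℝ) (p : ℝ × ℝ) (hf : AnalyticAt ℝ f p) (hfp : f p = 0)
    (hnz : ∀ U ∈ nhds p, ∃ q ∈ U, f q ≠ 0) :
    ∃ ε > (0 : ℝ), ∃ r : ℕ, ∃ γ : Fin (2 * r) → ℝ → ℝ × ℝ,
      (∀ i, ContinuousOn (γ i) (Set.Icc 0 1)) ∧
      (∀ i, Set.InjOn (γ i) (Set.Icc 0 1)) ∧
      (∀ i, γ i 0 = p) ∧
      (∀ i, p ∉ γ i '' Set.Ioc 0 1) ∧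
      (∀ i j, i ≠ j → (γ i '' Set.Ioc 0 1) ∩ (γ j '' Set.Ioc 0 1) = ∅) ∧
      {q ∈ Metric.ball p ε | f q = 0} =
        ({p} ∪ ⋃ i, γ i '' Set.Icc 0 1) ∩ Metric.ball p ε := by
  exact stmt_7_general (by simp) f p hf hfp hnz
end
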